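/- arXiv:1911.09921 — 2 statements merged into one kernel-verified Lean document; each statement's English description precedes it below -/
import Mathlib

section
/- Let D be a domain in ℂⁿ and U an open set with D ∩ U ≠ ∅ and D ∖ U ≠ ∅. Then for every z ∈ D ∩ U one has σ_{D∩U}(z) ≥ σ_D(z) · inf_{w ∈ D ∩ ∂U} exp(g_D(w,z)). -/
open Set Metric Filter Topology
open scoped Classical

noncomputable section

/-- `ℂⁿ` with the Euclidean norm. -/
abbrev Cn (n : ℕ) := EuclideanSpace ℂ (Fin n)

/-- A function `u : ℂⁿ → [-∞,∞)` (with values in `EReal`) is plurisubharmonic on `D` if it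
is upper semicontinuous on `D` and satisfies the sub-mean-value inequality on every closed
disc in a complex line contained in `D` (stated via continuous majorants on the boundary
circle, so as to handle the value `-∞`). -/
def PSHOn {n : ℕ} (u : Cn n → EReal) (D : Set (Cn n)) : Prop :=
  UpperSemicontinuousOn u D ∧
  ∀ a ∈ D, ∀ b : Cn n, ∀ r : ℝ, 0 < r →
    (∀ t : ℂ, ‖t‖ ≤ r → a + t • b ∈ D) →
    ∀ g : ℝ → ℝ, Continuous g →
      (∀ θ : ℝ, u (a + ((r : ℂ) * Complex.exp (θ * Complex.I)) • b) ≤ (g θ : EReal)) →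
      u a ≤ (((1 / (2 * Real.pi)) * ∫ θ in (0:ℝ)..(2 * Real.pi), g θ : ℝ) : EReal)

/-- The real exponential extended to `EReal`, with `exp(-∞) = 0` (the value at `⊤`,
irrelevant here, is also set to `0`). -/
def erexp (x : EReal) : ℝ := if x = ⊥ then 0 else if x = ⊤ then 0 else Real.exp x.toReal

/-- The pluricomplex Green function of `D` with pole at `z`:
`g_D(z,w) = sup {u(w) : u psh on D, u < 0, u ≤ log‖·-z‖ + C near z for some C}`. -/
def greenFn {n : ℕ} (D : Set (Cn n)) (z w : Cn n) : EReal :=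
  sSup {t : EReal | ∃ u : Cn n → EReal, PSHOn u D ∧ (∀ x ∈ D, u x < 0) ∧
    (∃ C : ℝ, ∀ᶠ x in 𝓝[D] z, u x ≤ ((Real.log ‖x - z‖ + C : ℝ) : EReal)) ∧ t = u w}

/-- The squeezing function of `D`: the supremum of all `r > 0` such that some holomorphic
embedding `f : D → 𝔹ₙ` with `f z = 0` satisfies `r𝔹ₙ ⊆ f(D)` (equal to `0` if no such
embedding exists, by the convention `sSup ∅ = 0` in `ℝ`). -/
def squeezing {n : ℕ} (D : Set (Cn n)) (z : Cn n) : ℝ :=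
  sSup {r : ℝ | 0 < r ∧ ∃ f : Cn n → Cn n, DifferentiableOn ℂ f D ∧ InjOn f D ∧
    MapsTo f D (ball (0 : Cn n) 1) ∧ f z = 0 ∧ ball (0 : Cn n) r ⊆ f '' D}



set_option linter.unusedSectionVars false

section SmoothHolo
variable {E F : Type} [NormedAddCommGroup E] [NormedSpace ℂ E] [FiniteDimensional ℂ E]
  [NormedAddCommGroup F] [NormedSpace ℂ F] [FiniteDimensional ℂ F]

lemma slice_hasDerivAt {f : E → F} {x v : E} {t : ℂ} (hf : DifferentiableAt ℂ f (x + t • v)) :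
    HasDerivAt (fun s : ℂ => f (x + s • v)) (fderiv ℂ f (x + t • v) v) t := by
  have h1 : HasDerivAt (fun s : ℂ => x + s • v) v t := by
    simpa using ((hasDerivAt_id t).smul_const v).const_add x
  exact hf.hasFDerivAt.comp_hasDerivAt t h1

lemma cauchy_fderiv {f : E → F} {x : E} {R M : ℝ} (hR : 0 < R)
    (hd : ∀ y ∈ closedBall x R, DifferentiableAt ℂ f y)
    (hM : ∀ y ∈ closedBall x R, ‖f y‖ ≤ M) : ‖fderiv ℂ f x‖ ≤ M / R := by
  have hM0 : 0 ≤ M := (norm_nonneg _).trans (hM x (mem_closedBall_self hR.le))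
  refine ContinuousLinearMap.opNorm_le_bound _ (by positivity) fun w => ?_
  by_cases hw : w = 0
  · simp [hw]
  have hw' : 0 < ‖w‖ := norm_pos_iff.2 hw
  have hin : ∀ t : ℂ, ‖t‖ ≤ R / ‖w‖ → x + t • w ∈ closedBall x R := by
    intro t ht
    rw [mem_closedBall_iff_norm, add_sub_cancel_left, norm_smul]
    rwa [le_div_iff₀ hw'] at ht
  have hder := slice_hasDerivAt (v := w) (t := 0) (f := f) (x := x)
    (hd _ (hin 0 (by simp; positivity)))
  have hdiff : DifferentiableOn ℂ (fun s : ℂ => f (x + s • w)) (closedBall 0 (R / ‖w‖)) :=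
    fun t ht => (slice_hasDerivAt (hd _ (hin t (by simpa using ht)))).differentiableAt.differentiableWithinAt
  have := Complex.norm_deriv_le_of_forall_mem_sphere_norm_le (R := R / ‖w‖) (C := M) (c := 0)
    (f := fun s : ℂ => f (x + s • w)) (by positivity)
    (hdiff.mono closure_ball_subset_closedBall).diffContOnCl
    (fun z hz => hM _ (hin z (by simpa using (mem_sphere_zero_iff_norm.1 hz).le)))
  rw [hder.deriv] at this
  simp only [zero_smul, add_zero] at this
  calc _ ≤ _ := this
    _ = _ := by field_simp

lemma differentiableOn_fderiv_apply {f : E → F} {V : Set E} (hV : IsOpen V)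
    (hf : DifferentiableOn ℂ f V) (v : E) : DifferentiableOn ℂ (fun x => fderiv ℂ f x v) V := by
  intro x0 hx0
  have hda : ∀ y ∈ V, DifferentiableAt ℂ f y := fun y hy => hf.differentiableAt (hV.mem_nhds hy)
  -- a ball on which f is bounded
  obtain ⟨R, hR, hRV, M, hM⟩ : ∃ R > 0, closedBall x0 (3 * R) ⊆ V ∧
      ∃ M, ∀ y ∈ closedBall x0 (3 * R), ‖f y‖ ≤ M := by
    obtain ⟨R', hR', hsub⟩ := Metric.nhds_basis_closedBall.mem_iff.1 (hV.mem_nhds hx0)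
    have := FiniteDimensional.proper ℂ E
    refine ⟨R' / 3, by positivity, ?_, ?_⟩
    · rwa [mul_div_cancel₀ _ (by norm_num : (3:ℝ) ≠ 0)]
    · rw [mul_div_cancel₀ _ (by norm_num : (3:ℝ) ≠ 0)]
      obtain ⟨M, hM⟩ := (isCompact_closedBall x0 R').exists_bound_of_continuousOn
        (hf.continuousOn.mono hsub)
      exact ⟨M, hM⟩
  have hM0 : 0 ≤ M := (norm_nonneg _).trans (hM x0 (mem_closedBall_self (by positivity)))
  have hbd : ∀ y ∈ closedBall x0 (2 * R), ‖fderiv ℂ f y‖ ≤ M / R := by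
    intro y hy
    have hs : closedBall y R ⊆ closedBall x0 (3 * R) := by
      apply closedBall_subset_closedBall'
      rw [mem_closedBall] at hy
      linarith
    exact cauchy_fderiv hR (fun z hz => hda _ (hRV (hs hz))) (fun z hz => hM _ (hs hz))
  obtain ⟨ρ, hρ, hρv⟩ : ∃ ρ > 0, ρ * ‖v‖ ≤ R := by
    refine ⟨R / (‖v‖ + 1), by positivity, ?_⟩
    rw [div_mul_eq_mul_div, div_le_iff₀ (by positivity)]
    nlinarith [norm_nonneg v]
  have hin : ∀ x ∈ ball x0 R, ∀ t : ℂ, ‖t‖ ≤ ρ → x + t • v ∈ closedBall x0 (2 * R) := by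
    intro x hx t ht
    rw [mem_ball_iff_norm] at hx
    rw [mem_closedBall_iff_norm]
    calc ‖x + t • v - x0‖ = ‖(x - x0) + t • v‖ := by congr 1; abel
      _ ≤ ‖x - x0‖ + ‖t‖ * ‖v‖ := by rw [← norm_smul]; exact norm_add_le _ _
      _ ≤ R + ρ * ‖v‖ := by gcongr
      _ ≤ 2 * R := by linarith
  have h23 : closedBall x0 (2 * R) ⊆ V :=
    (closedBall_subset_closedBall (by linarith)).trans hRV
  have hrep : ∀ x ∈ ball x0 R, fderiv ℂ f x v = (2 * Real.pi * Complex.I : ℂ)⁻¹ •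
      ∫ θ in (0:ℝ)..2 * Real.pi, deriv (circleMap 0 ρ) θ •
        ((1 / (circleMap 0 ρ θ - 0) ^ 2) • f (x + circleMap 0 ρ θ • v)) := by
    intro x hx
    have hdiff : DifferentiableOn ℂ (fun s : ℂ => f (x + s • v)) (closedBall 0 ρ) :=
      fun t ht => (slice_hasDerivAt (hda _ (h23 (hin x hx t (by simpa using ht))))).differentiableAt.differentiableWithinAt
    have h1 := hdiff.deriv_eq_smul_circleIntegral hρ
    have hder := slice_hasDerivAt (v := v) (t := 0) (f := f) (x := x)
      (hda _ (h23 (hin x hx 0 (by simp [hρ.le]))))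
    rw [hder.deriv] at h1
    simp only [zero_smul, add_zero] at h1
    have h2 : (2 * Real.pi * Complex.I : ℂ) ≠ 0 := by simp [Real.pi_ne_zero]
    rw [eq_inv_smul_iff₀ h2, ← h1]
    rfl
  have hcm : ∀ θ, ‖circleMap 0 ρ θ‖ ≤ ρ := fun θ => by simp [abs_of_pos hρ]
  have hcm0 : ∀ θ, circleMap 0 ρ θ ≠ 0 := fun θ => circleMap_ne_center hρ.ne'
  have key : HasFDerivAt (fun x => ∫ θ in (0:ℝ)..2 * Real.pi, deriv (circleMap 0 ρ) θ •
        ((1 / (circleMap 0 ρ θ - 0) ^ 2) • f (x + circleMap 0 ρ θ • v)))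
      (∫ θ in (0:ℝ)..2 * Real.pi, deriv (circleMap 0 ρ) θ •
        ((1 / (circleMap 0 ρ θ - 0) ^ 2) • fderiv ℂ f (x0 + circleMap 0 ρ θ • v))) x0 := by
    have hcont : ∀ x ∈ ball x0 R, Continuous fun θ => deriv (circleMap 0 ρ) θ •
        ((1 / (circleMap 0 ρ θ - 0) ^ 2) • f (x + circleMap 0 ρ θ • v)) := by
      intro x hx
      have c1 : Continuous fun θ => f (x + circleMap 0 ρ θ • v) := by
        refine hf.continuousOn.comp_continuous (by fun_prop) fun θ => h23 (hin x hx _ (hcm θ))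
      have c2 : Continuous fun θ => (1 / (circleMap 0 ρ θ - 0) ^ 2) := by
        refine continuous_const.div (by fun_prop) fun θ => ?_
        simpa using hcm0 θ
      have c3 : Continuous fun θ => deriv (circleMap 0 ρ) θ := by
        simp only [deriv_circleMap]; fun_prop
      exact c3.smul (c2.smul c1)
    borelize E
    borelize F
    have : ProperSpace (E →L[ℂ] F) := FiniteDimensional.proper ℂ _
    refine intervalIntegral.hasFDerivAt_integral_of_dominated_of_fderiv_le (𝕜 := ℂ)
      (F := fun x θ => deriv (circleMap 0 ρ) θ •
        ((1 / (circleMap 0 ρ θ - 0) ^ 2) • f (x + circleMap 0 ρ θ • v)))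
      (F' := fun x θ => deriv (circleMap 0 ρ) θ •
        ((1 / (circleMap 0 ρ θ - 0) ^ 2) • fderiv ℂ f (x + circleMap 0 ρ θ • v)))
      (bound := fun _ => ρ * (1 / ρ ^ 2 * (M / R)))
      (s := ball x0 R) (ball_mem_nhds x0 hR) ?_ ?_ ?_ ?_ ?_ ?_
    · filter_upwards [ball_mem_nhds x0 hR] with x hx
      exact (hcont x hx).aestronglyMeasurable
    · exact (hcont x0 (mem_ball_self hR)).intervalIntegrable _ _
    · apply Measurable.aestronglyMeasurable
      have m1 : Measurable fun θ : ℝ => fderiv ℂ f (x0 + circleMap 0 ρ θ • v) :=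
        (measurable_fderiv ℂ f).comp (by fun_prop : Continuous fun θ : ℝ => x0 + circleMap 0 ρ θ • v).measurable
      have m2 : Measurable fun θ => (1 / (circleMap 0 ρ θ - 0) ^ 2) := by
        refine Continuous.measurable (continuous_const.div (by fun_prop) fun θ => ?_)
        simpa using hcm0 θ
      have m3 : Measurable fun θ => deriv (circleMap 0 ρ) θ := by
        refine Continuous.measurable ?_
        simp only [deriv_circleMap]; fun_prop
      exact m3.smul (m2.smul m1)
    · refine Eventually.of_forall fun θ _ x hx => ?_
      rw [norm_smul, norm_smul]
      have e1 : ‖deriv (circleMap 0 ρ) θ‖ = ρ := by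
        simp [deriv_circleMap, abs_of_pos hρ]
      have e2 : ‖1 / (circleMap 0 ρ θ - 0) ^ 2‖ = 1 / ρ ^ 2 := by
        simp [abs_of_pos hρ]
      rw [e1, e2]
      gcongr
      exact hbd _ (hin x hx _ (hcm θ))
    · exact intervalIntegrable_const
    · refine Eventually.of_forall fun θ _ x hx => ?_
      refine HasFDerivAt.const_smul (HasFDerivAt.const_smul ?_ _) _
      have h1 := (hda _ (h23 (hin x hx _ (hcm θ)))).hasFDerivAt
      exact (hasFDerivAt_comp_add_right _).2 h1
  have key2 := key.const_smul ((2 * Real.pi * Complex.I : ℂ)⁻¹)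
  have : (fun x => fderiv ℂ f x v) =ᶠ[𝓝 x0] fun x => (2 * Real.pi * Complex.I : ℂ)⁻¹ •
      ∫ θ in (0:ℝ)..2 * Real.pi, deriv (circleMap 0 ρ) θ •
        ((1 / (circleMap 0 ρ θ - 0) ^ 2) • f (x + circleMap 0 ρ θ • v)) := by
    filter_upwards [ball_mem_nhds x0 hR] with x hx using hrep x hx
  exact (key2.congr_of_eventuallyEq this).differentiableAt.differentiableWithinAt

lemma holo_contDiffOn (n : ℕ) : ∀ {f : E → F} {V : Set E}, IsOpen V →
    DifferentiableOn ℂ f V → ContDiffOn ℂ n f V := by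
  induction n with
  | zero => intro f V _ hf; exact contDiffOn_zero.2 hf.continuousOn
  | succ n ih =>
    intro f V hV hf
    push_cast
    rw [contDiffOn_succ_iff_fderiv_of_isOpen hV]
    refine ⟨hf, by simp, ?_⟩
    rw [contDiffOn_clm_apply]
    intro y
    exact ih hV (differentiableOn_fderiv_apply hV hf y)

end SmoothHolo



section Level
variable {E F : Type} [NormedAddCommGroup E] [NormedSpace ℂ E] [FiniteDimensional ℂ E]
  [NormedAddCommGroup F] [NormedSpace ℂ F] [FiniteDimensional ℂ F]

/-- Parametrization of a regular level set of a holomorphic function. -/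
lemma level_param {g : E → ℂ} {V : Set E} (hV : IsOpen V) (hg : DifferentiableOn ℂ g V)
    {b : E} (hb : b ∈ V) (hne : fderiv ℂ g b ≠ 0) :
    ∃ (Φ : (fderiv ℂ g b).ker → E) (W : Set (fderiv ℂ g b).ker), IsOpen W ∧ 0 ∈ W ∧
      DifferentiableOn ℂ Φ W ∧ MapsTo Φ W V ∧ (∀ y ∈ W, g (Φ y) = g b) ∧ InjOn Φ W ∧
      Φ 0 = b ∧ HasFDerivAt Φ (fderiv ℂ g b).ker.subtypeL 0 := by
  have : CompleteSpace E := FiniteDimensional.complete ℂ E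
  have hcd : ContDiffAt ℂ 1 g b := (holo_contDiffOn 1 hV hg).contDiffAt (hV.mem_nhds hb)
  have hs : HasStrictFDerivAt g (fderiv ℂ g b) b := hcd.hasStrictFDerivAt (by norm_num)
  have hr : (fderiv ℂ g b).range = ⊤ := by
    apply LinearMap.range_eq_top.2
    exact LinearMap.surjective (f := (fderiv ℂ g b : E →ₗ[ℂ] ℂ)) (fun h => hne (by
      ext x
      exact congrArg (fun l : E →ₗ[ℂ] ℂ => l x) h))
  have hker := (fderiv ℂ g b).ker_closedComplemented_of_finiteDimensional_range
  set φ := HasStrictFDerivAt.implicitFunctionDataOfComplemented g (fderiv ℂ g b) hs hr hker with hφ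
  have hΦ : hs.implicitFunction g (fderiv ℂ g b) hr = φ.implicitFunction := rfl
  have hpt : φ.prodFun φ.pt = (g b, 0) := by
    simp [hφ, ImplicitFunctionData.prodFun]
  have hcdΦ : ContDiffAt ℂ 1 φ.implicitFunction.uncurry (g b, 0) := by
    rw [← hpt]
    refine ImplicitFunctionData.contDiffAt_implicitFunction hcd ?_ (by norm_num)
    change ContDiffAt ℂ 1 (fun x => Classical.choose hker (x - b)) b
    fun_prop
  have hdiff : ∀ᶠ y in 𝓝 (0 : (fderiv ℂ g b).ker),
      DifferentiableAt ℂ (φ.implicitFunction (g b)) y := by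
    have h1 := hcdΦ.eventually (by simp)
    have h2 : Tendsto (fun y : (fderiv ℂ g b).ker => (g b, y)) (𝓝 0) (𝓝 (g b, 0)) :=
      Continuous.tendsto (by fun_prop) 0
    filter_upwards [h2.eventually h1] with y hy
    exact (hy.differentiableAt (by norm_num)).comp y
      (f := fun y : (fderiv ℂ g b).ker => (g b, y)) (by fun_prop)
  have h0 : φ.implicitFunction (g b) 0 = b := by
    rw [← hΦ]; exact hs.implicitFunction_apply_image hr
  have hcont : ContinuousAt (φ.implicitFunction (g b)) 0 :=
    hdiff.self_of_nhds.continuousAt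
  have hVn : ∀ᶠ y in 𝓝 (0 : (fderiv ℂ g b).ker), φ.implicitFunction (g b) y ∈ V :=
    hcont.eventually (by rw [h0]; exact hV.mem_nhds hb)
  have heq : ∀ᶠ y in 𝓝 (0 : (fderiv ℂ g b).ker), g (φ.implicitFunction (g b) y) = g b := by
    have h2 : Tendsto (fun y : (fderiv ℂ g b).ker => (g b, y)) (𝓝 0) (𝓝 (g b, 0)) :=
      Continuous.tendsto (by fun_prop) 0
    filter_upwards [h2.eventually (hs.map_implicitFunction_eq hr)] with y hy
    exact hy
  have htar : ∀ᶠ y in 𝓝 (0 : (fderiv ℂ g b).ker),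
      (g b, y) ∈ (hs.implicitToOpenPartialHomeomorph g (fderiv ℂ g b) hr).target := by
    have h2 : Tendsto (fun y : (fderiv ℂ g b).ker => (g b, y)) (𝓝 0) (𝓝 (g b, 0)) :=
      Continuous.tendsto (by fun_prop) 0
    exact h2.eventually ((hs.implicitToOpenPartialHomeomorph g (fderiv ℂ g b) hr).open_target.mem_nhds
      (hs.mem_implicitToOpenPartialHomeomorph_target hr))
  obtain ⟨W, hW, hWo, hW0⟩ := _root_.eventually_nhds_iff.1 (hdiff.and (hVn.and (heq.and htar)))
  refine ⟨φ.implicitFunction (g b), W, hWo, hW0,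
    fun y hy => (hW y hy).1.differentiableWithinAt, fun y hy => (hW y hy).2.1,
    fun y hy => (hW y hy).2.2.1, ?_, h0, ?_⟩
  · intro y hy y' hy' h
    have := (hs.implicitToOpenPartialHomeomorph g (fderiv ℂ g b) hr).symm.injOn
      (hW y hy).2.2.2 (hW y' hy').2.2.2 h
    exact (Prod.ext_iff.1 this).2
  · exact (hs.to_implicitFunction hr).hasFDerivAt

/-- In one variable an injective holomorphic function has nonzero derivative. -/
lemma deriv_ne_zero_of_inj {s : ℂ → ℂ} (hs : AnalyticAt ℂ s 0) {N : Set ℂ} (hN : N ∈ 𝓝 (0:ℂ))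
    (hinj : InjOn s N) : deriv s 0 ≠ 0 := by
  intro hd
  have hs1 : AnalyticAt ℂ (fun z => s z - s 0) 0 := hs.sub analyticAt_const
  have hne : analyticOrderAt (fun z => s z - s 0) 0 ≠ ⊤ := by
    intro h
    rw [analyticOrderAt_eq_top] at h
    obtain ⟨r, hr, hball⟩ := Metric.mem_nhds_iff.1 (inter_mem h hN)
    have h1 : ((r / 2 : ℝ) : ℂ) ∈ ball (0:ℂ) r := by
      simp [abs_of_pos hr]; linarith
    have h2 := hball h1
    have h3 : s ((r / 2 : ℝ) : ℂ) = s 0 := sub_eq_zero.1 h2.1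
    have := hinj h2.2 (mem_of_mem_nhds hN) h3
    have h4 : (r / 2 : ℝ) = 0 := by exact_mod_cast this
    linarith
  obtain ⟨k, hk⟩ := ENat.ne_top_iff_exists.1 hne
  obtain ⟨g, hg, hg0, hgeq⟩ := (hs1.analyticOrderAt_eq_natCast).1 hk.symm
  simp only [sub_zero, smul_eq_mul] at hgeq
  have hk2 : 2 ≤ k := by
    have : ((2:ℕ) : ℕ∞) ≤ analyticOrderAt (fun z => s z - s 0) 0 := by
      rw [natCast_le_analyticOrderAt_iff_iteratedDeriv_eq_zero hs1]
      intro i hi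
      interval_cases i
      · simp
      · simp [hd]
    rw [← hk] at this
    exact_mod_cast this
  have hk0 : (k : ℂ) ≠ 0 := by
    have : k ≠ 0 := by omega
    exact_mod_cast this
  -- the k-th root
  set R : ℂ → ℂ := fun z => z * (g z / g 0) ^ ((k : ℂ)⁻¹) with hR
  have hga : AnalyticAt ℂ (fun z => (g z / g 0) ^ ((k : ℂ)⁻¹)) 0 := by
    refine AnalyticAt.cpow (hg.div analyticAt_const hg0) analyticAt_const ?_
    simp [div_self hg0]
  have hRs : HasStrictDerivAt R 1 0 := by
    have h1 := (hasStrictDerivAt_id (0:ℂ)).mul hga.hasStrictDerivAt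
    have h2 : 1 * (g 0 / g 0) ^ ((k : ℂ)⁻¹) +
        id (0:ℂ) * deriv (fun z => (g z / g 0) ^ ((k : ℂ)⁻¹)) 0 = 1 := by
      simp [div_self hg0]
    rw [h2] at h1
    exact h1
  have hmap : map R (𝓝 0) = 𝓝 (R 0) := hRs.map_nhds_eq one_ne_zero
  have hR0 : R 0 = 0 := by simp [hR]
  have hS : {z | z ∈ N ∧ s z - s 0 = z ^ k * g z} ∈ 𝓝 (0:ℂ) := inter_mem hN hgeq
  have him : R '' {z | z ∈ N ∧ s z - s 0 = z ^ k * g z} ∈ 𝓝 (0:ℂ) := by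
    have h1 := image_mem_map (m := R) hS
    rw [hmap] at h1
    rwa [hR0] at h1
  obtain ⟨r, hr, hball⟩ := Metric.mem_nhds_iff.1 him
  have hform : ∀ z, s z - s 0 = z ^ k * g z → s z - s 0 = g 0 * (R z) ^ k := by
    intro z hz
    rw [hz, hR]
    simp only [mul_pow]
    rw [Complex.cpow_nat_inv_pow _ (by omega)]
    field_simp
  set ζ := Complex.exp (2 * Real.pi * Complex.I / k) with hζ
  have hprim : IsPrimitiveRoot ζ k := Complex.isPrimitiveRoot_exp k (by omega)
  have hζn : ‖ζ‖ = 1 := hprim.norm'_eq_one (by omega)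
  have hζ1 : ζ ≠ 1 := hprim.ne_one (by omega)
  have hw1 : ((r / 2 : ℝ) : ℂ) ∈ ball (0:ℂ) r := by
    simp [abs_of_pos hr]; linarith
  have hw2 : ζ * ((r / 2 : ℝ) : ℂ) ∈ ball (0:ℂ) r := by
    simp [abs_of_pos hr, hζn]; linarith
  obtain ⟨z1, hz1, e1⟩ := hball hw1
  obtain ⟨z2, hz2, e2⟩ := hball hw2
  have hEq : s z1 = s z2 := by
    have a1 := hform z1 hz1.2
    have a2 := hform z2 hz2.2
    rw [e1] at a1
    rw [e2, mul_pow, hprim.pow_eq_one, one_mul, ← a1] at a2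
    exact (sub_left_inj.1 a2).symm
  have := hinj hz1.1 hz2.1 hEq
  rw [this] at e1
  rw [e1] at e2
  have hr0 : ((r / 2 : ℝ) : ℂ) ≠ 0 := by
    have : r / 2 ≠ 0 := by positivity
    exact_mod_cast this
  apply hζ1
  have := mul_right_cancel₀ hr0 ((one_mul _).trans e2)
  exact this.symm

end Level



section Osgood

/-- A zero exists inside the disc when the modulus at the centre is smaller than on the circle. -/
lemma exists_zero_disc {φ : ℂ → ℂ} {ρ m : ℝ} (hρ : 0 < ρ)
    (hd : DifferentiableOn ℂ φ (closedBall 0 ρ))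
    (h0 : ‖φ 0‖ < m) (hm : ∀ t ∈ sphere (0:ℂ) ρ, m ≤ ‖φ t‖) : ∃ t ∈ closedBall (0:ℂ) ρ, φ t = 0 := by
  by_contra! hcon
  have hmp : 0 < m := (norm_nonneg _).trans_lt h0
  have hinv : DifferentiableOn ℂ (fun t => (φ t)⁻¹) (closedBall 0 ρ) := hd.inv hcon
  have hle := Complex.norm_le_of_forall_mem_frontier_norm_le (f := fun t => (φ t)⁻¹)
    (U := ball 0 ρ) (C := m⁻¹) isBounded_ball
    (hinv.mono closure_ball_subset_closedBall).diffContOnCl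
    (by
      intro t ht
      rw [frontier_ball _ hρ.ne'] at ht
      rw [norm_inv]
      exact inv_anti₀ hmp (hm t ht))
    (subset_closure (mem_ball_self hρ))
  rw [norm_inv] at hle
  have h1 : 0 < ‖φ 0‖ := norm_pos_iff.2 (hcon 0 (mem_closedBall_self hρ.le))
  have := (inv_le_inv₀ h1 hmp).1 hle
  linarith

/-- Iterated derivatives in a fixed direction. -/
def dirDer {E : Type} [NormedAddCommGroup E] [NormedSpace ℂ E] (h : E → ℂ) (e : E) : ℕ → E → ℂ
  | 0 => h
  | k + 1 => fun x => fderiv ℂ (dirDer h e k) x e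

variable {E F : Type} [NormedAddCommGroup E] [NormedSpace ℂ E] [FiniteDimensional ℂ E]
  [NormedAddCommGroup F] [NormedSpace ℂ F] [FiniteDimensional ℂ F]

lemma dirDer_diff {h : E → ℂ} {V : Set E} (hV : IsOpen V) (hh : DifferentiableOn ℂ h V) (e : E)
    (k : ℕ) : DifferentiableOn ℂ (dirDer h e k) V := by
  induction k with
  | zero => exact hh
  | succ k ih => exact differentiableOn_fderiv_apply hV ih e

lemma dirDer_slice {h : E → ℂ} {V : Set E} (hV : IsOpen V) (hh : DifferentiableOn ℂ h V) (e a : E)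
    (k : ℕ) : ∀ t : ℂ, a + t • e ∈ V →
      iteratedDeriv k (fun t : ℂ => h (a + t • e)) t = dirDer h e k (a + t • e) := by
  induction k with
  | zero => intro t _; simp [dirDer]
  | succ k ih =>
    intro t ht
    rw [iteratedDeriv_succ]
    have hc : Continuous fun t : ℂ => a + t • e := by fun_prop
    have h1 : iteratedDeriv k (fun t : ℂ => h (a + t • e)) =ᶠ[𝓝 t]
        fun t => dirDer h e k (a + t • e) := by
      filter_upwards [hc.continuousAt.eventually (hV.mem_nhds ht)] with t' ht' using ih t' ht'
    rw [h1.deriv_eq]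
    exact (slice_hasDerivAt ((dirDer_diff hV hh e k).differentiableAt (hV.mem_nhds ht))).deriv

lemma exists_dirDer_ne {h : E → ℂ} {a : E} {R : ℝ} (hR : 0 < R)
    (hh : DifferentiableOn ℂ h (ball a R)) {e : E}
    (he : a + e ∈ ball a R) (hne : h (a + e) ≠ 0) : ∃ k, dirDer h e k a ≠ 0 := by
  by_contra! hcon
  set T : Set ℂ := (fun t : ℂ => a + t • e) ⁻¹' ball a R with hT
  have hc : Continuous fun t : ℂ => a + t • e := by fun_prop
  have hTo : IsOpen T := isOpen_ball.preimage hc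
  have hTc : Convex ℝ T := by
    intro t ht t' ht' p q hp hq hpq
    have h1 := convex_ball a R ht ht' hp hq hpq
    have h2 : a + (p • t + q • t') • e = p • (a + t • e) + q • (a + t' • e) := by
      have : a = (p + q) • a := by rw [hpq, one_smul]
      nth_rewrite 1 [this]
      simp only [add_smul, smul_add, smul_assoc]
      abel
    change a + (p • t + q • t') • e ∈ ball a R
    rw [h2]
    exact h1
  have h0T : (0:ℂ) ∈ T := by simp [hT, hR]
  have h1T : (1:ℂ) ∈ T := by simpa [hT] using he
  have hd : DifferentiableOn ℂ (fun t : ℂ => h (a + t • e)) T := fun t ht =>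
    (slice_hasDerivAt (hh.differentiableAt (isOpen_ball.mem_nhds ht))).differentiableAt.differentiableWithinAt
  have han : AnalyticOnNhd ℂ (fun t : ℂ => h (a + t • e)) T := hd.analyticOnNhd hTo
  have htop : analyticOrderAt (fun t : ℂ => h (a + t • e)) 0 = ⊤ := by
    rw [ENat.eq_top_iff_forall_ge]
    intro m
    rw [natCast_le_analyticOrderAt_iff_iteratedDeriv_eq_zero (han 0 h0T)]
    intro i _
    rw [dirDer_slice isOpen_ball hh e a i 0 h0T]
    simpa using hcon i
  rw [analyticOrderAt_eq_top] at htop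
  have := han.eqOn_zero_of_preconnected_of_eventuallyEq_zero hTc.isPreconnected h0T htop h1T
  simp at this
  exact hne this

/-- If `f` is holomorphic and its derivative vanishes on the zero set of a holomorphic function
`h` with `h a = 0`, then `f` is not injective (in dimension at least two). -/
lemma not_inj_of_zero_set (hE : 2 ≤ Module.finrank ℂ E) {f : E → F} {h : E → ℂ} {a : E} {R : ℝ}
    (hR : 0 < R) (hf : DifferentiableOn ℂ f (ball a R)) (hh : DifferentiableOn ℂ h (ball a R))
    (hinj : InjOn f (ball a R)) (ha : h a = 0)
    (hz : ∀ x ∈ ball a R, h x = 0 → fderiv ℂ f x = 0) : False := by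
  have hda : ∀ y ∈ ball a R, DifferentiableAt ℂ f y :=
    fun y hy => hf.differentiableAt (isOpen_ball.mem_nhds hy)
  have hnt : Nontrivial E := Module.nontrivial_of_finrank_pos (R := ℂ) (by omega)
  -- `h` is not identically zero
  obtain ⟨e, he, hne⟩ : ∃ e, a + e ∈ ball a R ∧ h (a + e) ≠ 0 := by
    by_contra! hcon
    have hall : ∀ x ∈ ball a R, fderiv ℂ f x = 0 := fun x hx =>
      hz x hx (by simpa using hcon (x - a) (by simpa using hx))
    obtain ⟨v, hv⟩ := exists_ne (0 : E)
    obtain ⟨c, hc0, hc⟩ : ∃ c : ℝ, 0 < c ∧ c * ‖v‖ < R := by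
      refine ⟨R / (‖v‖ + 1), by positivity, ?_⟩
      rw [div_mul_eq_mul_div, div_lt_iff₀ (by positivity)]
      nlinarith [norm_nonneg v]
    have hx : a + (c : ℂ) • v ∈ ball a R := by
      simpa [norm_smul, abs_of_pos hc0] using hc
    have heq := isOpen_ball.is_const_of_fderiv_eq_zero (𝕜 := ℂ)
      (convex_ball a R).isPreconnected hf (fun x hx => hall x hx) hx (mem_ball_self hR)
    have := hinj hx (mem_ball_self hR) heq
    simp [hv, hc0.ne'] at this
  have hex : ∃ k, ∃ b ∈ ball a R, h b = 0 ∧ dirDer h e k b ≠ 0 := by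
    obtain ⟨k, hk⟩ := exists_dirDer_ne hR hh he hne
    exact ⟨k, a, mem_ball_self hR, ha, hk⟩
  obtain ⟨b, hb, hhb, hkb⟩ := Nat.find_spec hex
  have hmin := fun m hm => Nat.find_min hex (m := m) hm
  cases hk : Nat.find hex with
  | zero => rw [hk] at hkb; exact hkb hhb
  | succ j =>
  rw [hk] at hkb
  set g := dirDer h e j with hgdef
  have hgd : DifferentiableOn ℂ g (ball a R) := dirDer_diff isOpen_ball hh e j
  have hgz : ∀ x ∈ ball a R, h x = 0 → g x = 0 := by
    intro x hx hx0
    have := hmin j (by omega)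
    push Not at this
    exact this x hx hx0
  have hge : fderiv ℂ g b e ≠ 0 := hkb
  have hgne : fderiv ℂ g b ≠ 0 := fun h0 => hge (by simp [h0])
  obtain ⟨Φ, W, hWo, hW0, hΦd, hΦV, hΦg, hΦinj, hΦ0, -⟩ :=
    level_param isOpen_ball hgd hb hgne
  have hgs : HasStrictFDerivAt g (fderiv ℂ g b) b :=
    ((holo_contDiffOn 1 isOpen_ball hgd).contDiffAt
      (isOpen_ball.mem_nhds hb)).hasStrictFDerivAt (by norm_num)
  -- `g` is injective along `e` near `b`
  have hginj : ∀ᶠ p : E × E in 𝓝 (b, b), ∀ t : ℂ, p.1 = p.2 + t • e → g p.1 = g p.2 → t = 0 := by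
    have hc : 0 < ‖fderiv ℂ g b e‖ / (2 * (‖e‖ + 1)) := by
      have := norm_pos_iff.2 hge
      positivity
    filter_upwards [hgs.isLittleO.def hc] with p hp t ht hgp
    rw [hgp, ht] at hp
    simp only [sub_self, zero_sub, norm_neg, add_sub_cancel_left, map_smul, norm_smul] at hp
    by_contra h0
    have ht0 : 0 < ‖t‖ := norm_pos_iff.2 h0
    have h1 : ‖fderiv ℂ g b e‖ ≤ ‖fderiv ℂ g b e‖ / (2 * (‖e‖ + 1)) * ‖e‖ := by
      have : ‖t‖ * ‖fderiv ℂ g b e‖ ≤ ‖t‖ * (‖fderiv ℂ g b e‖ / (2 * (‖e‖ + 1)) * ‖e‖) := by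
        linarith
      exact le_of_mul_le_mul_left this ht0
    rw [div_mul_eq_mul_div, le_div_iff₀ (by positivity)] at h1
    nlinarith [norm_nonneg e, norm_pos_iff.2 hge]
  rw [nhds_prod_eq] at hginj
  obtain ⟨O, hO, hO2⟩ := Filter.mem_prod_self_iff.1 hginj
  obtain ⟨ε, hε, hεO⟩ := Metric.mem_nhds_iff.1 (inter_mem hO (isOpen_ball.mem_nhds hb))
  -- slices of `h` at `b`
  have hcs : Continuous fun t : ℂ => b + t • e := by fun_prop
  have hTb : ∀ᶠ t : ℂ in 𝓝 0, b + t • e ∈ ball b (ε / 2) :=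
    hcs.continuousAt (by rw [zero_smul, add_zero]; exact ball_mem_nhds b (half_pos hε))
  have hsa : AnalyticAt ℂ (fun t : ℂ => h (b + t • e)) 0 := by
    have hTo : IsOpen ((fun t : ℂ => b + t • e) ⁻¹' ball a R) := isOpen_ball.preimage hcs
    refine DifferentiableOn.analyticAt (s := (fun t : ℂ => b + t • e) ⁻¹' ball a R) ?_
      (hTo.mem_nhds (by simpa using hb))
    exact fun t ht =>
      (slice_hasDerivAt (hh.differentiableAt (isOpen_ball.mem_nhds ht))).differentiableAt.differentiableWithinAt
  have hsne : ∀ᶠ t : ℂ in 𝓝[≠] 0, h (b + t • e) ≠ 0 := by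
    rcases hsa.eventually_eq_zero_or_eventually_ne_zero with h0 | h0
    · exfalso
      apply hge
      have h1 : (fun t : ℂ => g (b + t • e)) =ᶠ[𝓝 0] fun _ => 0 := by
        filter_upwards [h0, hTb] with t ht htb
        exact hgz _ (hεO (ball_subset_ball (by linarith) htb)).2 ht
      have h2 := h1.deriv_eq
      have h3 := (slice_hasDerivAt (f := g) (x := b) (v := e) (t := 0)
        (by simpa using hgd.differentiableAt (isOpen_ball.mem_nhds hb))).deriv
      rw [h3] at h2
      simpa using h2
    · exact h0
  obtain ⟨ρ, hρ, hρ1, hρ2⟩ : ∃ ρ > 0, (∀ t : ℂ, ‖t‖ ≤ ρ → t ≠ 0 → h (b + t • e) ≠ 0) ∧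
      ρ * ‖e‖ < ε / 2 := by
    rw [eventually_nhdsWithin_iff] at hsne
    obtain ⟨r, hr, hr2⟩ := Metric.nhds_basis_closedBall.mem_iff.1 hsne
    refine ⟨min r (ε / 4 / (‖e‖ + 1)), lt_min hr (by positivity), ?_, ?_⟩
    · intro t ht ht0
      exact hr2 (by simpa using ht.trans (min_le_left _ _)) ht0
    · calc min r (ε / 4 / (‖e‖ + 1)) * ‖e‖ ≤ ε / 4 / (‖e‖ + 1) * ‖e‖ := by
            gcongr; exact min_le_right _ _
        _ ≤ ε / 4 := by
            rw [div_mul_eq_mul_div, div_le_iff₀ (by positivity)]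
            nlinarith [norm_nonneg e]
        _ < ε / 2 := by linarith
  have hinε : ∀ x ∈ ball b (ε / 2), ∀ t : ℂ, ‖t‖ ≤ ρ → x + t • e ∈ ball b ε := by
    intro x hx t ht
    rw [mem_ball_iff_norm] at hx ⊢
    calc ‖x + t • e - b‖ = ‖(x - b) + t • e‖ := by congr 1; abel
      _ ≤ ‖x - b‖ + ‖t‖ * ‖e‖ := by rw [← norm_smul]; exact norm_add_le _ _
      _ ≤ ‖x - b‖ + ρ * ‖e‖ := by gcongr
      _ < ε := by linarith
  have hhc : ∀ x ∈ ball b ε, ContinuousAt h x := fun x hx =>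
    (hh.differentiableAt (isOpen_ball.mem_nhds (hεO hx).2)).continuousAt
  have hbb : b ∈ ball b (ε / 2) := mem_ball_self (half_pos hε)
  obtain ⟨m, hm, hmb⟩ : ∃ m > 0, ∀ t ∈ sphere (0:ℂ) ρ, m < ‖h (b + t • e)‖ := by
    have hco : ContinuousOn (fun t : ℂ => ‖h (b + t • e)‖) (sphere 0 ρ) := by
      intro t ht
      refine ContinuousAt.continuousWithinAt (ContinuousAt.norm ?_)
      exact ContinuousAt.comp (f := fun t : ℂ => b + t • e) (g := h)
        (hhc _ (hinε b hbb t (by simpa using (mem_sphere_zero_iff_norm.1 ht).le)))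
        hcs.continuousAt
    obtain ⟨t0, ht0, hmin⟩ := (isCompact_sphere (0:ℂ) ρ).exists_isMinOn
      (NormedSpace.sphere_nonempty.2 hρ.le) hco
    have hpos : 0 < ‖h (b + t0 • e)‖ := norm_pos_iff.2 (hρ1 t0
      (by simpa using (mem_sphere_zero_iff_norm.1 ht0).le)
      (fun h0 => by rw [h0] at ht0; simp at ht0; linarith))
    refine ⟨_, half_pos hpos, fun t ht => ?_⟩
    have := hmin ht
    simp only [mem_ofPred_eq] at this
    linarith
  have hev : ∀ᶠ x in 𝓝 b, ∀ t ∈ sphere (0:ℂ) ρ, m < ‖h (x + t • e)‖ := by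
    refine (isCompact_sphere (0:ℂ) ρ).eventually_forall_of_forall_eventually fun t ht => ?_
    have hct : ContinuousAt (fun p : E × ℂ => ‖h (p.1 + p.2 • e)‖) (b, t) := by
      refine ContinuousAt.norm ?_
      refine ContinuousAt.comp (f := fun p : E × ℂ => p.1 + p.2 • e) (g := h) ?_ (by fun_prop)
      exact (hhc _ (hinε b hbb t (by simpa using (mem_sphere_zero_iff_norm.1 ht).le)))
    exact hct.eventually (lt_mem_nhds (hmb t ht))
  have hev2 : ∀ᶠ x in 𝓝 b, ‖h x‖ < m := by
    have : ContinuousAt (fun x => ‖h x‖) b := (hhc b (mem_ball_self hε)).norm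
    exact this.eventually (gt_mem_nhds (by simpa [hhb] using hm))
  have hkey : ∀ᶠ x in 𝓝 b, g x = 0 → h x = 0 := by
    filter_upwards [hev, hev2, ball_mem_nhds b (half_pos hε)] with x h1 h2 h3 hgx
    have hd : DifferentiableOn ℂ (fun t : ℂ => h (x + t • e)) (closedBall 0 ρ) := fun t ht =>
      (slice_hasDerivAt (hh.differentiableAt (isOpen_ball.mem_nhds
        (hεO (hinε x h3 t (by simpa using ht))).2))).differentiableAt.differentiableWithinAt
    obtain ⟨t, ht, ht0⟩ := exists_zero_disc hρ hd (by simpa using h2) (fun t ht => (h1 t ht).le)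
    have hmem := hεO (hinε x h3 t (by simpa using ht))
    have hg0 := hgz _ hmem.2 ht0
    have : t = 0 := hO2 (mk_mem_prod hmem.1 (hεO (ball_subset_ball (by linarith) h3)).1) t rfl
      (by simp only; rw [hg0, hgx])
    rw [this] at ht0
    simpa using ht0
  have hgb : g b = 0 := hgz b hb hhb
  have hΦc : ContinuousAt Φ 0 := (hΦd.differentiableAt (hWo.mem_nhds hW0)).continuousAt
  have hfin : ∀ᶠ y in 𝓝 (0 : (fderiv ℂ g b).ker), h (Φ y) = 0 := by
    have h1 : Tendsto Φ (𝓝 0) (𝓝 b) := by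
      have := hΦc.tendsto
      rwa [hΦ0] at this
    filter_upwards [h1.eventually hkey, hWo.mem_nhds hW0] with y h2 h3
    exact h2 (by rw [hΦg y h3, hgb])
  obtain ⟨r, hr, hrW⟩ := Metric.mem_nhds_iff.1 (inter_mem hfin (hWo.mem_nhds hW0))
  have hcomp : ∀ y ∈ ball (0 : (fderiv ℂ g b).ker) r, HasFDerivAt (f ∘ Φ) (0 : _ →L[ℂ] F) y := by
    intro y hy
    have h1 := (hda _ (hΦV (hrW hy).2)).hasFDerivAt
    rw [hz _ (hΦV (hrW hy).2) (hrW hy).1] at h1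
    have h2 := h1.comp y (hΦd.differentiableAt (hWo.mem_nhds (hrW hy).2)).hasFDerivAt
    simpa using h2
  have hconst : ∀ y ∈ ball (0 : (fderiv ℂ g b).ker) r, y = 0 := by
    intro y hy
    have h0 : (0 : (fderiv ℂ g b).ker) ∈ ball 0 r := mem_ball_self hr
    have heq := isOpen_ball.is_const_of_fderiv_eq_zero (𝕜 := ℂ) (f := f ∘ Φ)
      (convex_ball (0 : (fderiv ℂ g b).ker) r).isPreconnected
      (fun x hx => (hcomp x hx).differentiableAt.differentiableWithinAt)
      (fun x hx => (hcomp x hx).fderiv) hy h0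
    exact hΦinj (hrW hy).2 (hrW h0).2 (hinj (hΦV (hrW hy).2) (hΦV (hrW h0).2) heq)
  -- dimension count
  have hrank := LinearMap.finrank_range_add_finrank_ker (fderiv ℂ g b : E →ₗ[ℂ] ℂ)
  have hrange := Submodule.finrank_le (LinearMap.range (fderiv ℂ g b : E →ₗ[ℂ] ℂ))
  rw [Module.finrank_self] at hrange
  have hpos : 0 < Module.finrank ℂ (fderiv ℂ g b).ker := by
    change 0 < Module.finrank ℂ (LinearMap.ker (fderiv ℂ g b : E →ₗ[ℂ] ℂ))
    omega
  have : Nontrivial (fderiv ℂ g b).ker := Module.nontrivial_of_finrank_pos hpos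
  obtain ⟨v, hv⟩ := exists_ne (0 : (fderiv ℂ g b).ker)
  have hv' : 0 < ‖v‖ := norm_pos_iff.2 hv
  have hc0 : 0 < r / 2 / ‖v‖ := by positivity
  have := hconst (((r / 2 / ‖v‖ : ℝ) : ℂ) • v) (by
    rw [mem_ball_zero_iff, norm_smul, Complex.norm_real, Real.norm_of_nonneg hc0.le,
      div_mul_cancel₀ _ hv'.ne']
    linarith)
  rw [smul_eq_zero] at this
  rcases this with h0 | h0
  · exact hc0.ne' (by exact_mod_cast h0)
  · exact hv h0

end Osgood



section Osgood2

/-- Osgood's theorem: injective equidimensional holomorphic maps have injective derivative. -/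
theorem osgood (n : ℕ) : ∀ (E F : Type) [NormedAddCommGroup E] [NormedSpace ℂ E]
    [FiniteDimensional ℂ E] [NormedAddCommGroup F] [NormedSpace ℂ F] [FiniteDimensional ℂ F],
    Module.finrank ℂ E = n → Module.finrank ℂ F = n →
    ∀ (V : Set E) (f : E → F), IsOpen V → DifferentiableOn ℂ f V → InjOn f V →
    ∀ a ∈ V, Function.Injective (fderiv ℂ f a) := by
  induction n with
  | zero =>
    intro E F _ _ _ _ _ _ hE _ V f _ _ _ a _
    have : Subsingleton E := Module.finrank_zero_iff.1 hE
    exact Function.injective_of_subsingleton _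
  | succ n ih =>
    intro E F _ _ _ _ _ _ hE hF V f hV hf hinj
    have hda : ∀ y ∈ V, DifferentiableAt ℂ f y :=
      fun y hy => hf.differentiableAt (hV.mem_nhds hy)
    -- the derivative is zero or injective
    have step1 : ∀ a ∈ V, fderiv ℂ f a ≠ 0 → Function.Injective (fderiv ℂ f a) := by
      intro a ha hne
      obtain ⟨v, hv⟩ : ∃ v, fderiv ℂ f a v ≠ 0 := by
        by_contra! hcon
        exact hne (ContinuousLinearMap.ext hcon)
      obtain ⟨l, hl⟩ := SeparatingDual.exists_ne_zero (R := ℂ) hv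
      have hgd : DifferentiableOn ℂ (fun x => l (f x)) V :=
        l.differentiable.comp_differentiableOn hf
      have hg' : fderiv ℂ (fun x => l (f x)) a = l ∘L fderiv ℂ f a :=
        (l.hasFDerivAt.comp a (hda a ha).hasFDerivAt).fderiv
      have hgne : fderiv ℂ (fun x => l (f x)) a ≠ 0 := by
        intro h0
        apply hl
        have := congrArg (fun L => L v) (hg'.symm.trans h0)
        simpa using this
      obtain ⟨Φ, W, hWo, hW0, hΦd, hΦV, hΦg, hΦinj, hΦ0, hΦ'⟩ := level_param hV hgd ha hgne
      have hl0 : l ≠ 0 := fun h0 => hl (by simp [h0])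
      obtain ⟨p, hp⟩ := l.ker_closedComplemented_of_finiteDimensional_range
      have hmem : ∀ y ∈ W, f (Φ y) - f a ∈ l.ker := by
        intro y hy
        have := hΦg y hy
        rw [LinearMap.mem_ker]
        change l (f (Φ y) - f a) = 0
        rw [map_sub, this, sub_self]
      have hk := ih (fderiv ℂ (fun x => l (f x)) a).ker l.ker
        (by
          have := Module.Dual.finrank_ker_add_one_of_ne_zero
            (f := (fderiv ℂ (fun x => l (f x)) a : E →ₗ[ℂ] ℂ))
            (fun h0 => hgne (ContinuousLinearMap.coe_injective h0))
          rw [hE] at this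
          exact Nat.succ_injective this)
        (by
          have := Module.Dual.finrank_ker_add_one_of_ne_zero
            (f := (l : F →ₗ[ℂ] ℂ))
            (fun h0 => hl0 (ContinuousLinearMap.coe_injective h0))
          rw [hF] at this
          exact Nat.succ_injective this)
        W (fun y => p (f (Φ y) - f a)) hWo
        (p.differentiable.comp_differentiableOn ((hf.comp hΦd hΦV).sub_const _))
        (by
          intro y hy y' hy' h
          have h1 := hp ⟨_, hmem y hy⟩
          have h2 := hp ⟨_, hmem y' hy'⟩
          simp only at h h1 h2
          rw [h, h2, Subtype.mk.injEq, sub_left_inj] at h1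
          exact (hΦinj hy' hy (hinj (hΦV hy') (hΦV hy) h1)).symm)
        0 hW0
      have hfa : HasFDerivAt f (fderiv ℂ f a) (Φ 0) := by
        rw [hΦ0]; exact (hda a ha).hasFDerivAt
      have hk' := (p.hasFDerivAt.comp (0 : (fderiv ℂ (fun x => l (f x)) a).ker)
        ((hfa.comp 0 hΦ').sub_const (f a))).fderiv
      change fderiv ℂ (fun y => p (f (Φ y) - f a)) 0 = _ at hk'
      rw [hk'] at hk
      rw [injective_iff_map_eq_zero]
      intro x hx
      have hxk : x ∈ (fderiv ℂ (fun x => l (f x)) a).ker := by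
        rw [hg', LinearMap.mem_ker]
        simp [hx]
      have := (injective_iff_map_eq_zero _).1 hk ⟨x, hxk⟩ (by simp [hx])
      simpa using this
    intro a ha
    apply step1 a ha
    intro h0
    obtain ⟨R, hR, hRV⟩ := Metric.mem_nhds_iff.1 (hV.mem_nhds ha)
    have eqv : F ≃L[ℂ] E := ContinuousLinearEquiv.ofFinrankEq (hF.trans hE.symm)
    by_cases hn : n = 0
    · subst hn
      obtain ⟨e, he⟩ : ∃ e : E, e ≠ 0 := by
        have : Nontrivial E := Module.nontrivial_of_finrank_pos (R := ℂ) (by omega)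
        exact exists_ne 0
      have L : F ≃L[ℂ] ℂ := ContinuousLinearEquiv.ofFinrankEq (by simpa using hF)
      have hcs : Continuous fun t : ℂ => a + t • e := by fun_prop
      have hTo : IsOpen ((fun t : ℂ => a + t • e) ⁻¹' V) := hV.preimage hcs
      have h0T : (0:ℂ) ∈ ((fun t : ℂ => a + t • e) ⁻¹' V) := by simpa using ha
      have hsl : ∀ t ∈ ((fun t : ℂ => a + t • e) ⁻¹' V),
          HasDerivAt (fun t : ℂ => L (f (a + t • e))) (L (fderiv ℂ f (a + t • e) e)) t :=
        fun t ht => L.hasFDerivAt.comp_hasDerivAt t (slice_hasDerivAt (hda _ ht))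
      refine deriv_ne_zero_of_inj (s := fun t : ℂ => L (f (a + t • e)))
        (DifferentiableOn.analyticAt (fun t ht =>
          (hsl t ht).differentiableAt.differentiableWithinAt) (hTo.mem_nhds h0T))
        (hTo.mem_nhds h0T) ?_ ?_
      · intro t ht t' ht' h
        have := hinj ht ht' (L.injective h)
        simpa [he] using this
      · rw [(hsl 0 h0T).deriv]
        simp [h0]
    · let b := Module.finBasis ℂ E
      let M : E → Matrix (Fin (Module.finrank ℂ E)) (Fin (Module.finrank ℂ E)) ℂ := fun x =>
        LinearMap.toMatrix b b ((eqv : F →L[ℂ] E) ∘L fderiv ℂ f x : E →L[ℂ] E)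
      refine not_inj_of_zero_set (f := f) (h := fun x => (M x).det) (by omega) hR (hf.mono hRV) ?_
        (hinj.mono hRV) ?_ ?_
      · simp only [Matrix.det_apply]
        refine DifferentiableOn.fun_sum fun σ _ => ?_
        refine DifferentiableOn.const_smul ?_ _
        suffices hs : ∀ i, DifferentiableOn ℂ (fun x => M x (σ i) i) (ball a R) from fun x hx => by
          have := (HasFDerivWithinAt.finsetProd (u := Finset.univ)
            (g := fun i x => M x (σ i) i) fun i _ => (hs i x hx).hasFDerivWithinAt).differentiableWithinAt
          exact this
        intro i
        have : ∀ x, M x (σ i) i = LinearMap.toContinuousLinearMap (b.coord (σ i))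
            ((eqv : F →L[ℂ] E) (fderiv ℂ f x (b i))) := by
          intro x
          simp [M, LinearMap.toMatrix_apply]
        simp only [this]
        exact (ContinuousLinearMap.differentiable _).comp_differentiableOn
          ((ContinuousLinearMap.differentiable _).comp_differentiableOn
            ((differentiableOn_fderiv_apply hV hf (b i)).mono hRV))
      · have : Nonempty (Fin (Module.finrank ℂ E)) := ⟨⟨0, by omega⟩⟩
        have hM : M a = 0 := by simp [M, h0]
        simp only [hM]
        exact Matrix.det_zero
      · intro x hx hdet
        by_contra hne
        have hi := step1 x (hRV hx) hne
        have hi2 : Function.Injective (((eqv : F →L[ℂ] E) ∘L fderiv ℂ f x : E →L[ℂ] E) : E →ₗ[ℂ] E) :=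
          eqv.injective.comp hi
        have hker := LinearMap.ker_eq_bot.2 hi2
        have hu := (LinearMap.isUnit_iff_ker_eq_bot _).2 hker
        have := (LinearMap.isUnit_iff_isUnit_det _).1 hu
        simp only [M, LinearMap.det_toMatrix] at hdet
        rw [hdet] at this
        simp at this

end Osgood2



section Inverse

lemma holo_equiv {n : ℕ} {D : Set (Cn n)} (hD : IsOpen D) {f : Cn n → Cn n}
    (hf : DifferentiableOn ℂ f D) (hinj : InjOn f D) {x : Cn n} (hx : x ∈ D) :
    ∃ A : Cn n ≃L[ℂ] Cn n, HasStrictFDerivAt f (A : Cn n →L[ℂ] Cn n) x := by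
  have hi := osgood (Module.finrank ℂ (Cn n)) (Cn n) (Cn n) rfl rfl D f hD hf hinj x hx
  have hs : HasStrictFDerivAt f (fderiv ℂ f x) x :=
    ((holo_contDiffOn 1 hD hf).contDiffAt (hD.mem_nhds hx)).hasStrictFDerivAt (by norm_num)
  let L : Cn n ≃ₗ[ℂ] Cn n := LinearEquiv.ofInjectiveEndo (fderiv ℂ f x : Cn n →ₗ[ℂ] Cn n) hi
  refine ⟨L.toContinuousLinearEquiv, ?_⟩
  have hL : (L.toContinuousLinearEquiv : Cn n →L[ℂ] Cn n) = fderiv ℂ f x := by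
    ext1 v; rfl
  rw [hL]
  exact hs

lemma inv_continuousAt {n : ℕ} {D : Set (Cn n)} (hD : IsOpen D) {f finv : Cn n → Cn n}
    (hf : DifferentiableOn ℂ f D) (hinj : InjOn f D) (hl : ∀ x ∈ D, finv (f x) = x)
    {x : Cn n} (hx : x ∈ D) : ContinuousAt finv (f x) := by
  obtain ⟨A, hA⟩ := holo_equiv hD hf hinj hx
  have hmap : map f (𝓝 x) = 𝓝 (f x) := hA.map_nhds_eq_of_equiv
  rw [ContinuousAt, hl x hx, ← hmap, tendsto_map'_iff]
  refine tendsto_id.congr' ?_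
  filter_upwards [hD.mem_nhds hx] with y hy
  simp [hl y hy]

lemma inv_bound {n : ℕ} {D : Set (Cn n)} (hD : IsOpen D) {f : Cn n → Cn n}
    (hf : DifferentiableOn ℂ f D) (hinj : InjOn f D) {w : Cn n} (hw : w ∈ D) :
    ∃ M > 0, ∀ᶠ x in 𝓝 w, ‖x - w‖ ≤ M * ‖f x - f w‖ := by
  obtain ⟨A, hA⟩ := holo_equiv hD hf hinj hw
  have := (HasFDerivAt.isTheta_sub hA.hasFDerivAt A.toHomeomorph.isInducing).isBigO_symm
  obtain ⟨M, hM, h⟩ := this.exists_pos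
  exact ⟨M, hM, h.bound⟩

end Inverse

section Visc

lemma circle_avg_re {H : ℂ → ℂ} {ρ : ℝ} (hρ : 0 < ρ)
    (hH : ∀ t ∈ closedBall (0:ℂ) ρ, DifferentiableAt ℂ H t) :
    Real.circleAverage (fun t => (H t).re) 0 ρ = (H 0).re := by
  have hd : DiffContOnCl ℂ H (ball 0 |ρ|) := by
    rw [abs_of_pos hρ]
    refine DifferentiableOn.diffContOnCl fun t ht => ?_
    exact (hH t (closure_ball_subset_closedBall ht)).differentiableWithinAt
  have h := hd.circleAverage
  have hi : CircleIntegrable H 0 ρ := by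
    apply ContinuousOn.circleIntegrable hρ.le
    exact fun t ht => (hH t (sphere_subset_closedBall ht)).continuousAt.continuousWithinAt
  rw [← h]
  exact (Complex.reCLM.circleAverage_comp_comm hi)

lemma visc {n : ℕ} {D : Set (Cn n)} (hD : IsOpen D) {u : Cn n → EReal} (hu : PSHOn u D)
    {x0 : Cn n} (hx0 : x0 ∈ D) {u0 : ℝ} (hu0 : u x0 = (u0 : EReal)) (b : Cn n)
    {M H : ℂ → ℂ} (c : ℝ) {κ : ℝ} (hκ : 0 < κ)
    (hM : ∀ᶠ t in 𝓝 (0:ℂ), DifferentiableAt ℂ M t) (hM0 : M 0 ≠ 0)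
    (hH : ∀ᶠ t in 𝓝 (0:ℂ), DifferentiableAt ℂ H t) (hH0 : H 0 = 0)
    (hle : ∀ᶠ t in 𝓝 (0:ℂ), u (x0 + t • b) ≤
      ((u0 + c * (Real.log ‖M t‖ - Real.log ‖M 0‖) + (H t).re - κ * ‖t‖ ^ 2 : ℝ) : EReal)) :
    False := by
  have hM0' : ∀ᶠ t in 𝓝 (0:ℂ), M t ≠ 0 :=
    hM.self_of_nhds.continuousAt.eventually_ne hM0
  have hc : Continuous fun t : ℂ => x0 + t • b := by fun_prop
  have hDt : ∀ᶠ t in 𝓝 (0:ℂ), x0 + t • b ∈ D := by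
    apply hc.continuousAt
    simp only [zero_smul, add_zero]
    exact hD.mem_nhds hx0
  obtain ⟨ρ, hρ, hball⟩ := Metric.nhds_basis_closedBall.mem_iff.1
    ((((hM.eventually_nhds.and hM0').and hH).and hDt).and hle)
  have hb : ∀ t : ℂ, ‖t‖ ≤ ρ → _ := fun t ht => hball (mem_closedBall_zero_iff.2 ht)
  have hcirc : ∀ θ : ℝ, ‖(ρ : ℂ) * Complex.exp (θ * Complex.I)‖ = ρ := by
    intro θ
    rw [norm_mul, Complex.norm_exp_ofReal_mul_I, mul_one, Complex.norm_real,
      Real.norm_of_nonneg hρ.le]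
  have hcc : Continuous fun θ : ℝ => (ρ : ℂ) * Complex.exp (θ * Complex.I) := by fun_prop
  set G : ℂ → ℝ := fun t => u0 + c * (Real.log ‖M t‖ - Real.log ‖M 0‖) + (H t).re - κ * ρ ^ 2
  have hGc : ∀ t : ℂ, ‖t‖ ≤ ρ → ContinuousAt G t := by
    intro t ht
    have h1 := (hb t ht).1.1.1.1.self_of_nhds.continuousAt
    have h2 := (hb t ht).1.1.2.continuousAt
    have h3 : ContinuousAt (fun t => Real.log ‖M t‖) t :=
      h1.norm.log (norm_ne_zero_iff.2 (hb t ht).1.1.1.2)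
    have h4 : ContinuousAt (fun t => (H t).re) t := Complex.continuous_re.continuousAt.comp h2
    exact ((continuousAt_const.add (continuousAt_const.mul (h3.sub continuousAt_const))).add h4).sub
      continuousAt_const
  have hkey := hu.2 x0 hx0 b ρ hρ (fun t ht => (hb t ht).1.2)
    (fun θ => G ((ρ : ℂ) * Complex.exp (θ * Complex.I)))
    (continuous_iff_continuousAt.2 fun θ =>
      ContinuousAt.comp (g := G) (f := fun θ : ℝ => (ρ : ℂ) * Complex.exp (θ * Complex.I))
        (hGc _ (hcirc θ).le) hcc.continuousAt)
    (fun θ => by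
      have := (hb _ (hcirc θ).le).2
      rw [hcirc θ] at this
      exact this)
  have havg : Real.circleAverage G 0 ρ = u0 - κ * ρ ^ 2 := by
    have hl : Real.circleAverage (fun t => Real.log ‖M t‖) 0 ρ = Real.log ‖M 0‖ := by
      refine AnalyticOnNhd.circleAverage_log_norm_of_ne_zero (g := M) ?_ ?_
      · rw [abs_of_pos hρ]
        intro t ht
        rw [Complex.analyticAt_iff_eventually_differentiableAt]
        exact (hb t (by simpa using ht)).1.1.1.1
      · intro t ht
        exact (hb t (by rw [abs_of_pos hρ] at ht; simpa using ht)).1.1.1.2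
    have hr := circle_avg_re hρ (fun t ht => (hb t (by simpa using ht)).1.1.2)
    rw [hH0] at hr
    have i1 : CircleIntegrable (fun t => Real.log ‖M t‖) 0 ρ := by
      apply ContinuousOn.circleIntegrable hρ.le
      intro t ht
      have ht' : ‖t‖ ≤ ρ := (mem_sphere_zero_iff_norm.1 ht).le
      exact ((hb t ht').1.1.1.1.self_of_nhds.continuousAt.norm.log
        (norm_ne_zero_iff.2 (hb t ht').1.1.1.2)).continuousWithinAt
    have i2 : CircleIntegrable (fun t => (H t).re) 0 ρ := by
      apply ContinuousOn.circleIntegrable hρ.le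
      intro t ht
      have ht' : ‖t‖ ≤ ρ := (mem_sphere_zero_iff_norm.1 ht).le
      exact (Complex.continuous_re.continuousAt.comp
        (hb t ht').1.1.2.continuousAt).continuousWithinAt
    have hGeq : G = (fun _ => u0 - c * Real.log ‖M 0‖ - κ * ρ ^ 2) +
        (c • (fun t => Real.log ‖M t‖) + fun t => (H t).re) := by
      funext t
      simp [G]
      ring
    rw [hGeq, Real.circleAverage_add (circleIntegrable_const _ _ _) ((i1.const_smul).add i2),
      Real.circleAverage_add i1.const_smul i2, Real.circleAverage_smul, hl, hr,
      Real.circleAverage_const]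
    simp only [smul_eq_mul, Complex.zero_re]
    ring
  rw [Real.circleAverage] at havg
  simp only [circleMap, zero_add, smul_eq_mul] at havg
  rw [one_div, havg, hu0, EReal.coe_le_coe_iff] at hkey
  have : 0 < κ * ρ ^ 2 := by positivity
  linarith

end Visc



section Key

lemma local_max_false {n : ℕ} {D : Set (Cn n)} (hD : IsOpen D) {u : Cn n → EReal}
    (hu : PSHOn u D) {f : Cn n → Cn n} (hf : DifferentiableOn ℂ f D) (hinj : InjOn f D)
    {x0 : Cn n} (hx0 : x0 ∈ D) {u0 : ℝ} (hu0 : u x0 = (u0 : EReal))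
    (P : Cn n →L[ℂ] ℂ) (Ψ : Cn n →L[ℂ] Cn n) {e : Cn n} (hPe : P e = 1) (hΨe : Ψ e = 0)
    {m : ℂ → ℂ} (hm : ∀ᶠ l in 𝓝 (P (f x0)), DifferentiableAt ℂ m l) (hm0 : m (P (f x0)) ≠ 0)
    (c : ℝ) {δ K : ℝ} (hδ : 0 < δ) (hK : 0 ≤ K)
    (hmax : ∀ᶠ x in 𝓝 x0, u x ≤ ((u0 + c * (Real.log ‖m (P (f x))‖ - Real.log ‖m (P (f x0))‖)
      - δ * (‖P (f x)‖ ^ 2 - ‖P (f x0)‖ ^ 2) + K * (‖Ψ (f x)‖ ^ 2 - ‖Ψ (f x0)‖ ^ 2) : ℝ) : EReal)) :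
    False := by
  obtain ⟨A, hA⟩ := holo_equiv hD hf hinj hx0
  set b := A.symm e with hb
  have hda : ∀ y ∈ D, DifferentiableAt ℂ f y := fun y hy => hf.differentiableAt (hD.mem_nhds hy)
  have hc : Continuous fun t : ℂ => x0 + t • b := by fun_prop
  have hten : Tendsto (fun t : ℂ => x0 + t • b) (𝓝 0) (𝓝 x0) := by
    have := hc.tendsto 0
    simpa using this
  have hDt : ∀ᶠ t in 𝓝 (0:ℂ), x0 + t • b ∈ D := hten (hD.mem_nhds hx0)
  have hfd : ∀ᶠ t in 𝓝 (0:ℂ), DifferentiableAt ℂ (fun t : ℂ => f (x0 + t • b)) t := by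
    filter_upwards [hDt] with t ht
    exact (slice_hasDerivAt (hda _ ht)).differentiableAt
  have hf0 : HasDerivAt (fun t : ℂ => f (x0 + t • b)) e 0 := by
    have h1 := slice_hasDerivAt (f := f) (x := x0) (v := b) (t := 0) (by simpa using hda x0 hx0)
    have h2 : fderiv ℂ f (x0 + (0:ℂ) • b) b = e := by
      rw [zero_smul, add_zero, hA.hasFDerivAt.fderiv]
      simp [hb]
    rwa [h2] at h1
  set α : ℂ → ℂ := fun t => P (f (x0 + t • b)) with hα
  set β : ℂ → Cn n := fun t => Ψ (f (x0 + t • b)) with hβ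
  have hα0 : α 0 = P (f x0) := by simp [hα]
  have hβ0 : β 0 = Ψ (f x0) := by simp [hβ]
  have hαd : ∀ᶠ t in 𝓝 (0:ℂ), DifferentiableAt ℂ α t := by
    filter_upwards [hfd] with t ht using P.differentiableAt.comp t ht
  have hβd : ∀ᶠ t in 𝓝 (0:ℂ), DifferentiableAt ℂ β t := by
    filter_upwards [hfd] with t ht using Ψ.differentiableAt.comp t ht
  have hα' : HasDerivAt α 1 0 := by
    have := P.hasFDerivAt.comp_hasDerivAt (0:ℂ) hf0
    rwa [hPe] at this
  have hβ' : HasDerivAt β 0 0 := by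
    have := Ψ.hasFDerivAt.comp_hasDerivAt (0:ℂ) hf0
    rwa [hΨe] at this
  have hαt : Tendsto α (𝓝 0) (𝓝 (P (f x0))) := by
    have := hα'.continuousAt.tendsto
    rwa [hα0] at this
  let H : ℂ → ℂ := fun t => -(2 * δ : ℝ) * inner ℂ (α 0) (α t - α 0)
    + (2 * K : ℝ) * inner ℂ (β 0) (β t - β 0)
  set τ := Real.sqrt (δ / (8 * (K + 1))) with hτ
  have hτp : 0 < τ := Real.sqrt_pos.2 (by positivity)
  have hτ2 : K * τ ^ 2 ≤ δ / 8 := by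
    rw [hτ, Real.sq_sqrt (by positivity)]
    rw [mul_div_assoc', div_le_div_iff₀ (by positivity) (by positivity)]
    nlinarith
  have e1 : ∀ᶠ t in 𝓝 (0:ℂ), ‖α t - α 0 - t‖ ≤ 1 / 2 * ‖t‖ := by
    have := hα'.isLittleO.def (c := 1 / 2) (by norm_num)
    simpa using this
  have e2 : ∀ᶠ t in 𝓝 (0:ℂ), ‖β t - β 0‖ ≤ τ * ‖t‖ := by
    have := hβ'.isLittleO.def hτp
    simpa using this
  refine visc hD hu hx0 hu0 b (M := fun t => m (α t)) (H := H) c (κ := δ / 8) (by positivity)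
    ?_ (by simpa only [hα0] using hm0) ?_ (by simp [H]) ?_
  · filter_upwards [hαd, hαt.eventually hm] with t h1 h2
    exact h2.comp t h1
  · filter_upwards [hαd, hβd] with t h1 h2
    have i1 : DifferentiableAt ℂ (fun t => inner ℂ (α 0) (α t - α 0)) t :=
      (innerSL ℂ (α 0)).differentiableAt.comp t (h1.sub_const _)
    have i2 : DifferentiableAt ℂ (fun t => inner ℂ (β 0) (β t - β 0)) t :=
      (innerSL ℂ (β 0)).differentiableAt.comp t (h2.sub_const _)
    exact (i1.const_mul _).add (i2.const_mul _)
  · filter_upwards [hten.eventually hmax, e1, e2] with t h1 h2 h3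
    refine h1.trans (EReal.coe_le_coe_iff.2 ?_)
    have n1 := norm_add_sq (𝕜 := ℂ) (α 0) (α t - α 0)
    have n2 := norm_add_sq (𝕜 := ℂ) (β 0) (β t - β 0)
    rw [add_sub_cancel] at n1 n2
    have hH : (H t).re = -(2 * δ) * RCLike.re (inner ℂ (α 0) (α t - α 0))
        + 2 * K * RCLike.re (inner ℂ (β 0) (β t - β 0)) := by
      simp only [H, Complex.add_re, RCLike.re_to_complex, ← Complex.ofReal_neg, Complex.re_ofReal_mul]
    have g1 : ‖t‖ / 2 ≤ ‖α t - α 0‖ := by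
      have := norm_sub_norm_le t (t - (α t - α 0))
      rw [sub_sub_cancel, norm_sub_rev t] at this
      linarith
    have g2 : ‖t‖ ^ 2 / 4 ≤ ‖α t - α 0‖ ^ 2 := by
      have := pow_le_pow_left₀ (by positivity) g1 2
      linarith
    have g3 : ‖β t - β 0‖ ^ 2 ≤ τ ^ 2 * ‖t‖ ^ 2 := by
      have := pow_le_pow_left₀ (by positivity) h3 2
      linarith
    have g4 : K * ‖β t - β 0‖ ^ 2 ≤ δ / 8 * ‖t‖ ^ 2 := by
      calc K * ‖β t - β 0‖ ^ 2 ≤ K * (τ ^ 2 * ‖t‖ ^ 2) := by gcongr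
        _ = K * τ ^ 2 * ‖t‖ ^ 2 := by ring
        _ ≤ _ := by gcongr
    have g5 : δ * (‖t‖ ^ 2 / 4) ≤ δ * ‖α t - α 0‖ ^ 2 := by gcongr
    change u0 + c * (Real.log ‖m (α t)‖ - Real.log ‖m (P (f x0))‖) -
      δ * (‖α t‖ ^ 2 - ‖P (f x0)‖ ^ 2) + K * (‖β t‖ ^ 2 - ‖Ψ (f x0)‖ ^ 2) ≤ _
    rw [hH, ← hα0, ← hβ0, n1, n2]
    linarith

end Key



section KeyEst

/-- The Blaschke factor of the disc of radius `R` vanishing at `s`. -/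
def blas (R s : ℝ) (l : ℂ) : ℂ := (R : ℂ) * (l - s) / ((R : ℂ) ^ 2 - s * l)

lemma blas_den {R s : ℝ} (hs : 0 < s) (hR : s < R) {l : ℂ} (hl : ‖l‖ ≤ R) :
    ((R : ℂ) ^ 2 - s * l) ≠ 0 := by
  intro h
  have h1 : (R : ℂ) ^ 2 = s * l := sub_eq_zero.1 h
  have h2 := congrArg norm h1
  rw [norm_pow, norm_mul, Complex.norm_real, Complex.norm_real, Real.norm_of_nonneg hs.le,
    Real.norm_of_nonneg (hs.trans hR).le] at h2
  nlinarith [norm_nonneg l]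

lemma blas_norm_lower {R s ρ : ℝ} (hs : 0 < s) (hR : s < R) (hρ : 0 < ρ) {l : ℂ} (hl : ‖l‖ ≤ R)
    (hl2 : ρ ≤ ‖l - s‖) : ρ / (2 * R) ≤ ‖blas R s l‖ := by
  have hRp : 0 < R := hs.trans hR
  have hd : 0 < ‖(R : ℂ) ^ 2 - s * l‖ := norm_pos_iff.2 (blas_den hs hR hl)
  have hd2 : ‖(R : ℂ) ^ 2 - s * l‖ ≤ 2 * R ^ 2 := by
    refine (norm_sub_le _ _).trans ?_
    rw [norm_pow, norm_mul, Complex.norm_real, Complex.norm_real, Real.norm_of_nonneg hs.le,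
      Real.norm_of_nonneg hRp.le]
    nlinarith [norm_nonneg l]
  rw [blas, norm_div, norm_mul, Complex.norm_real, Real.norm_of_nonneg hRp.le,
    div_le_div_iff₀ (by positivity) hd]
  calc ρ * ‖(R : ℂ) ^ 2 - s * l‖ ≤ ‖l - s‖ * (2 * R ^ 2) := by gcongr
    _ = _ := by ring

lemma blas_norm_one {R s : ℝ} (hs : 0 < s) (hR : s < R) {l : ℂ} (hl : ‖l‖ = R) :
    ‖blas R s l‖ = 1 := by
  have hd : ‖(R : ℂ) ^ 2 - s * l‖ ≠ 0 := norm_ne_zero_iff.2 (blas_den hs hR hl.le)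
  rw [blas, norm_div, div_eq_one_iff_eq hd]
  have hsq : l.re * l.re + l.im * l.im = R ^ 2 := by
    rw [← hl, ← Complex.normSq_apply, Complex.normSq_eq_norm_sq]
  have : ‖(R : ℂ) * (l - s)‖ ^ 2 = ‖(R : ℂ) ^ 2 - s * l‖ ^ 2 := by
    rw [← Complex.normSq_eq_norm_sq, ← Complex.normSq_eq_norm_sq, Complex.normSq_apply,
      Complex.normSq_apply]
    simp [pow_two]
    linear_combination (R ^ 2 - s ^ 2) * hsq
  exact (pow_left_inj₀ (norm_nonneg _) (norm_nonneg _) two_ne_zero).1 this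

lemma blas_diff {R s : ℝ} {l : ℂ} (hd : ((R : ℂ) ^ 2 - s * l) ≠ 0) :
    DifferentiableAt ℂ (blas R s) l := by
  unfold blas
  exact DifferentiableAt.div (by fun_prop) (by fun_prop) hd

lemma key_est {n : ℕ} {D : Set (Cn n)} (hD : IsOpen D) {u : Cn n → EReal}
    (hu : PSHOn u D) (hneg : ∀ x ∈ D, u x < 0)
    {f finv : Cn n → Cn n} (hf : DifferentiableOn ℂ f D) (hinj : InjOn f D)
    (hl : ∀ x ∈ D, finv (f x) = x) {r : ℝ} (hball : ball (0 : Cn n) r ⊆ f '' D)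
    {z w : Cn n} (hz : z ∈ D) (hw : w ∈ D) (hfz : f z = 0)
    (hpole : ∃ C : ℝ, ∀ᶠ x in 𝓝[D] w, u x ≤ ((Real.log ‖x - w‖ + C : ℝ) : EReal))
    {R : ℝ} (hs : 0 < ‖f w‖) (hsR : ‖f w‖ < R) (hRr : R < r)
    {ε δ : ℝ} (hε : 0 < ε) (hε1 : ε < 1) (hδ : 0 < δ) :
    u z ≤ (((1 - ε) * Real.log (‖f w‖ / R) + δ * R ^ 2 : ℝ) : EReal) := by
  obtain ⟨C, hC⟩ := hpole
  set p := f w with hp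
  set s := ‖p‖ with hsdef
  have hRp : 0 < R := hs.trans hsR
  -- facts on the inverse
  have hfinv : ∀ y ∈ ball (0 : Cn n) r, finv y ∈ D ∧ f (finv y) = y := by
    intro y hy
    obtain ⟨x, hx, rfl⟩ := hball hy
    rw [hl x hx]
    exact ⟨hx, rfl⟩
  have hfc : ∀ y ∈ ball (0 : Cn n) r, ContinuousAt finv y := by
    intro y hy
    obtain ⟨x, hx, rfl⟩ := hball hy
    exact inv_continuousAt hD hf hinj hl hx
  -- coordinates
  set e : Cn n := ((s⁻¹ : ℝ) : ℂ) • p with he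
  have hen : ‖e‖ = 1 := by
    rw [he, norm_smul, Complex.norm_real, Real.norm_of_nonneg (by positivity), ← hsdef,
      inv_mul_cancel₀ hs.ne']
  have hpe : p = (s : ℂ) • e := by
    rw [he, smul_smul, ← Complex.ofReal_mul, mul_inv_cancel₀ hs.ne', Complex.ofReal_one, one_smul]
  set P : Cn n →L[ℂ] ℂ := innerSL ℂ e with hP
  have hPe : P e = 1 := by
    rw [hP, innerSL_apply_apply, inner_self_eq_norm_sq_to_K, hen]; simp
  set Ψ : Cn n →L[ℂ] Cn n := ContinuousLinearMap.id ℂ (Cn n) - P.smulRight e with hΨ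
  have hΨa : ∀ y, Ψ y = y - P y • e := fun y => by simp [hΨ]
  have hΨe : Ψ e = 0 := by rw [hΨa, hPe, one_smul, sub_self]
  have hdec : ∀ y, y = P y • e + Ψ y := fun y => by rw [hΨa]; abel
  have hPp : P p = s := by rw [hpe, map_smul, hPe]; simp
  have hΨp : Ψ p = 0 := by rw [hpe, map_smul, hΨe, smul_zero]
  have hnorm : ∀ y, ‖y‖ ≤ ‖P y‖ + ‖Ψ y‖ := fun y => by
    conv_lhs => rw [hdec y]
    refine (norm_add_le _ _).trans ?_
    rw [norm_smul, hen, mul_one]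
  -- pole estimate
  have hpr : p ∈ ball (0 : Cn n) r := by rw [mem_ball_zero_iff]; exact hsR.trans hRr
  obtain ⟨M, hM, hMb⟩ := inv_bound hD hf hinj hw
  obtain ⟨ρ1, hρ1, hpole⟩ : ∃ ρ1 > 0, ∀ y ∈ ball p ρ1, y ≠ p →
      u (finv y) ≤ ((Real.log (M * ‖y - p‖) + C : ℝ) : EReal) := by
    rw [eventually_nhdsWithin_iff] at hC
    have ht : Tendsto finv (𝓝 p) (𝓝 w) := by
      have := (inv_continuousAt hD hf hinj hl hw).tendsto
      rwa [hl w hw] at this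
    have := ((ht.eventually hC).and (ht.eventually hMb)).and (isOpen_ball.mem_nhds hpr)
    obtain ⟨ρ1, hρ1, h⟩ := Metric.mem_nhds_iff.1 this
    refine ⟨ρ1, hρ1, fun y hy hyp => ?_⟩
    obtain ⟨⟨h1, h2⟩, h3⟩ := h hy
    have h4 := hfinv y h3
    refine (h1 h4.1).trans (EReal.coe_le_coe_iff.2 ?_)
    rw [h4.2] at h2
    have h5 : 0 < ‖finv y - w‖ := by
      rw [norm_pos_iff, sub_ne_zero]
      intro h6
      apply hyp
      rw [← h4.2, h6]
    have := Real.log_le_log h5 h2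
    linarith
  -- choice of ρ
  obtain ⟨ρ, hρ, hρs, hρρ, hρl⟩ : ∃ ρ > 0, ρ ≤ s ∧ 2 * ρ < ρ1 ∧
      Real.log (M * (2 * ρ)) + C ≤ (1 - ε) * Real.log (ρ / (2 * R)) := by
    have h1 : ∀ᶠ ρ in 𝓝[>] (0:ℝ), Real.log ρ <
        (-(1 - ε) * Real.log (2 * R) - Real.log (2 * M) - C) / ε :=
      Real.tendsto_log_nhdsGT_zero.eventually (eventually_lt_atBot _)
    have h2 : ∀ᶠ ρ in 𝓝[>] (0:ℝ), ρ < min s (ρ1 / 2) :=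
      (eventually_lt_nhds (lt_min hs (half_pos hρ1))).filter_mono nhdsWithin_le_nhds
    obtain ⟨ρ, ⟨h1, h2⟩, h3⟩ := ((h1.and h2).and self_mem_nhdsWithin).exists
    have h3 : 0 < ρ := h3
    refine ⟨ρ, h3, (h2.trans_le (min_le_left _ _)).le, ?_, ?_⟩
    · have := h2.trans_le (min_le_right _ _)
      linarith
    · rw [lt_div_iff₀ hε] at h1
      rw [show M * (2 * ρ) = (2 * M) * ρ by ring, Real.log_mul (by positivity) h3.ne',
        Real.log_div h3.ne' (by positivity)]
      linarith
  set η := min ρ ((r - R) / 2) with hη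
  have hηp : 0 < η := lt_min hρ (by linarith)
  have hηρ : η ≤ ρ := min_le_left _ _
  have hηr : R + η < r := by
    have : η ≤ (r - R) / 2 := min_le_right _ _
    linarith
  set B := (1 - ε) * Real.log (ρ / (2 * R)) with hB
  set K := |B| / η ^ 2 with hK
  have hK0 : 0 ≤ K := by positivity
  have hKη : K * η ^ 2 = |B| := div_mul_cancel₀ _ (by positivity)
  -- the comparison function
  set Q : Cn n → ℝ := fun y => (1 - ε) * Real.log ‖blas R s (P y)‖ - δ * ‖P y‖ ^ 2 + δ * R ^ 2
    + K * ‖Ψ y‖ ^ 2 with hQ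
  set T : Set (Cn n) := {y | ‖P y‖ ≤ R ∧ ρ ≤ ‖P y - s‖ ∧ ‖Ψ y‖ ≤ η} with hT
  have hTr : ∀ y ∈ T, y ∈ ball (0 : Cn n) r := by
    intro y hy
    rw [mem_ball_zero_iff]
    have := hnorm y
    linarith [hy.1, hy.2.2]
  have hTclosed : IsClosed T := by
    have h1 : IsClosed {y : Cn n | ‖P y‖ ≤ R} := isClosed_le (by fun_prop) continuous_const
    have h2 : IsClosed {y : Cn n | ρ ≤ ‖P y - s‖} := isClosed_le continuous_const (by fun_prop)
    have h3 : IsClosed {y : Cn n | ‖Ψ y‖ ≤ η} := isClosed_le (by fun_prop) continuous_const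
    exact h1.inter (h2.inter h3)
  have hTcomp : IsCompact T :=
    Metric.isCompact_of_isClosed_isBounded hTclosed (isBounded_ball.subset hTr)
  have hbne : ∀ y ∈ T, blas R s (P y) ≠ 0 := by
    intro y hy
    have := blas_norm_lower hs hsR hρ hy.1 hy.2.1
    have h2 : 0 < ρ / (2 * R) := by positivity
    exact norm_pos_iff.1 (h2.trans_le this)
  have hlow : ∀ y ∈ T, B + K * ‖Ψ y‖ ^ 2 ≤ Q y := by
    intro y hy
    have h1 := Real.log_le_log (by positivity) (blas_norm_lower hs hsR hρ hy.1 hy.2.1)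
    have h2 : (1 - ε) * Real.log (ρ / (2 * R)) ≤ (1 - ε) * Real.log ‖blas R s (P y)‖ :=
      mul_le_mul_of_nonneg_left h1 (by linarith)
    have h3 : ‖P y‖ ^ 2 ≤ R ^ 2 := pow_le_pow_left₀ (norm_nonneg _) hy.1 2
    have h4 : δ * ‖P y‖ ^ 2 ≤ δ * R ^ 2 := mul_le_mul_of_nonneg_left h3 hδ.le
    simp only [hQ]
    linarith
  have hQc : ContinuousOn Q T := by
    intro y hy
    have h1 : ContinuousAt (fun y => blas R s (P y)) y :=
      ContinuousAt.comp (f := fun y => P y) (g := blas R s)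
        (blas_diff (blas_den hs hsR hy.1)).continuousAt P.continuous.continuousAt
    have h2 := h1.norm.log (norm_ne_zero_iff.2 (hbne y hy))
    have h3 : ContinuousAt (fun y => ‖P y‖ ^ 2) y := by fun_prop
    have h4 : ContinuousAt (fun y => ‖Ψ y‖ ^ 2) y := by fun_prop
    exact ((((h2.const_mul _).sub (h3.const_mul _)).add continuousAt_const).add
      (h4.const_mul _)).continuousWithinAt
  have h0T : (0 : Cn n) ∈ T := by
    refine ⟨by simpa using hRp.le, ?_, by simpa using hηp.le⟩
    simp [abs_of_pos hs, hρs]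
  have hQ0 : Q 0 = (1 - ε) * Real.log (s / R) + δ * R ^ 2 := by
    simp only [hQ, map_zero, norm_zero]
    have : ‖blas R s 0‖ = s / R := by
      simp only [blas, zero_sub, mul_zero, sub_zero, norm_div, norm_mul, norm_neg, norm_pow,
        Complex.norm_real, Real.norm_of_nonneg hs.le, Real.norm_of_nonneg hRp.le]
      field_simp
    rw [this]
    ring
  rw [← hQ0]
  by_contra! hcon
  -- maximise
  have husc : UpperSemicontinuousOn (fun y => u (finv y) + ((-Q y : ℝ) : EReal)) T := by
    refine UpperSemicontinuousOn.add' ?_ ?_ ?_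
    · exact hu.1.comp (fun y hy => (hfc y (hTr y hy)).continuousWithinAt)
        (fun y hy => (hfinv y (hTr y hy)).1)
    · exact (continuous_coe_real_ereal.comp_continuousOn hQc.neg).upperSemicontinuousOn
    · intro y hy
      refine EReal.continuousAt_add (Or.inr ?_) (Or.inr ?_) <;> simp
  obtain ⟨y0, hy0, hmax⟩ := husc.exists_isMaxOn ⟨0, h0T⟩ hTcomp
  have hx0 := hfinv y0 (hTr y0 hy0)
  set x0 := finv y0 with hx0def
  have hz0 : finv 0 = z := by rw [← hfz, hl z hz]
  have hpos : (0 : EReal) < u x0 + ((-Q y0 : ℝ) : EReal) := by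
    have h1 := hmax h0T
    simp only [mem_ofPred_eq, hz0] at h1
    refine lt_of_lt_of_le ?_ h1
    induction hv : u z using EReal.rec with
    | bot => rw [hv] at hcon; simp at hcon
    | top => have := hneg z hz; rw [hv] at this; simp at this
    | coe a =>
      rw [hv, EReal.coe_lt_coe_iff] at hcon
      rw [← EReal.coe_add, ← EReal.coe_zero, EReal.coe_lt_coe_iff]
      linarith
  obtain ⟨u0, hu0⟩ : ∃ u0 : ℝ, u x0 = (u0 : EReal) := by
    induction hv : u x0 using EReal.rec with
    | bot => rw [hv] at hpos; simp at hpos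
    | top => have := hneg x0 hx0.1; rw [hv] at this; simp at this
    | coe a => exact ⟨a, rfl⟩
  have hu0n : u0 < 0 := by
    have := hneg x0 hx0.1
    rw [hu0] at this
    exact_mod_cast this
  have hgap : Q y0 < u0 := by
    rw [hu0, ← EReal.coe_add, ← EReal.coe_zero, EReal.coe_lt_coe_iff] at hpos
    linarith
  -- the maximum is interior
  have hi1 : ‖P y0‖ < R := by
    refine lt_of_le_of_ne hy0.1 fun h => ?_
    have h1 : Q y0 = K * ‖Ψ y0‖ ^ 2 := by
      simp only [hQ]
      rw [blas_norm_one hs hsR h, h, Real.log_one]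
      ring
    have : 0 ≤ K * ‖Ψ y0‖ ^ 2 := by positivity
    linarith
  have hi3 : ‖Ψ y0‖ < η := by
    refine lt_of_le_of_ne hy0.2.2 fun h => ?_
    have h1 := hlow y0 hy0
    rw [h, hKη] at h1
    linarith [neg_abs_le B]
  have hi2 : ρ < ‖P y0 - s‖ := by
    refine lt_of_le_of_ne hy0.2.1 fun h => ?_
    have h1 : ‖y0 - p‖ ≤ 2 * ρ := by
      have := hnorm (y0 - p)
      rw [map_sub, map_sub, hPp, hΨp, sub_zero, ← h] at this
      linarith
    have h2 : y0 ≠ p := by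
      intro h3
      rw [h3, hPp, sub_self, norm_zero] at h
      linarith
    have h3 := hpole y0 (by rw [mem_ball_iff_norm]; linarith) h2
    rw [← hx0def, hu0, EReal.coe_le_coe_iff] at h3
    have h4 : Real.log (M * ‖y0 - p‖) ≤ Real.log (M * (2 * ρ)) := by
      apply Real.log_le_log
      · exact mul_pos hM (norm_pos_iff.2 (sub_ne_zero.2 h2))
      · gcongr
    have h5 := hlow y0 hy0
    have : 0 ≤ K * ‖Ψ y0‖ ^ 2 := by positivity
    linarith
  have hTn : T ∈ 𝓝 y0 := by
    have h1 : IsOpen {y : Cn n | ‖P y‖ < R} := isOpen_lt (by fun_prop) continuous_const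
    have h2 : IsOpen {y : Cn n | ρ < ‖P y - s‖} := isOpen_lt continuous_const (by fun_prop)
    have h3 : IsOpen {y : Cn n | ‖Ψ y‖ < η} := isOpen_lt (by fun_prop) continuous_const
    filter_upwards [h1.mem_nhds hi1, h2.mem_nhds hi2, h3.mem_nhds hi3] with y a1 a2 a3
    exact ⟨le_of_lt a1, le_of_lt a2, le_of_lt a3⟩
  have hft : Tendsto f (𝓝 x0) (𝓝 y0) := by
    have := (hf.differentiableAt (hD.mem_nhds hx0.1)).continuousAt.tendsto
    rwa [hx0.2] at this
  refine local_max_false hD hu hf hinj hx0.1 hu0 P Ψ hPe hΨe (m := blas R s) ?_ ?_ (1 - ε) hδ hK0 ?_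
  · rw [hx0.2]
    have h1 : ContinuousAt (fun l : ℂ => (R : ℂ) ^ 2 - s * l) (P y0) := by fun_prop
    filter_upwards [h1.eventually_ne (blas_den hs hsR hy0.1)] with l hl' using blas_diff hl'
  · rw [hx0.2]; exact hbne y0 hy0
  · filter_upwards [hft hTn, hD.mem_nhds hx0.1] with x hx hxD
    have h1 := hmax (show f x ∈ T from hx)
    simp only [mem_ofPred_eq, hl x hxD] at h1
    rw [hx0.2]
    rw [← hx0def, hu0] at h1
    induction hv : u x using EReal.rec with
    | bot => exact bot_le
    | top => have := hneg x hxD; rw [hv] at this; simp at this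
    | coe a =>
      rw [hv, ← EReal.coe_add, ← EReal.coe_add, EReal.coe_le_coe_iff] at h1
      rw [EReal.coe_le_coe_iff]
      simp only [hQ] at h1
      linarith

end KeyEst



section Final

lemma erexp_nonneg (x : EReal) : 0 ≤ erexp x := by
  unfold erexp
  split_ifs
  · exact le_rfl
  · exact le_rfl
  · exact (Real.exp_pos _).le

lemma erexp_le {x : EReal} {a : ℝ} (ha : x ≤ (a : EReal)) : erexp x ≤ Real.exp a := by
  unfold erexp
  split_ifs with h1 h2
  · exact (Real.exp_pos _).le
  · exact (Real.exp_pos _).le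
  · apply Real.exp_le_exp.2
    have := EReal.toReal_le_toReal ha h1 (EReal.coe_ne_top a)
    simpa using this

lemma green_bound {n : ℕ} {D : Set (Cn n)} (hD : IsOpen D)
    {f finv : Cn n → Cn n} (hf : DifferentiableOn ℂ f D) (hinj : InjOn f D)
    (hl : ∀ x ∈ D, finv (f x) = x) {r : ℝ} (hball : ball (0 : Cn n) r ⊆ f '' D)
    {z w : Cn n} (hz : z ∈ D) (hw : w ∈ D) (hfz : f z = 0)
    (hs : 0 < ‖f w‖) (hsr : ‖f w‖ < r) :
    greenFn D w z ≤ ((Real.log (‖f w‖ / r) : ℝ) : EReal) := by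
  refine sSup_le ?_
  rintro t ⟨u, hu, hneg, hpole, rfl⟩
  have hr : 0 < r := hs.trans hsr
  have hcont : ContinuousAt (fun ε : ℝ => (1 - ε) * Real.log (‖f w‖ / (r - ε)) + ε * (r - ε) ^ 2)
      0 := by
    have h1 : ContinuousAt (fun ε : ℝ => ‖f w‖ / (r - ε)) 0 :=
      ContinuousAt.div (by fun_prop) (by fun_prop) (by simpa using hr.ne')
    have h2 := h1.log (by simpa using ⟨by simpa using hs, hr.ne'⟩)
    have h3 : ContinuousAt (fun ε : ℝ => 1 - ε) 0 := by fun_prop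
    have h4 : ContinuousAt (fun ε : ℝ => ε * (r - ε) ^ 2) 0 := by fun_prop
    exact (h3.mul h2).add h4
  have ht : Tendsto (fun ε : ℝ =>
      (((1 - ε) * Real.log (‖f w‖ / (r - ε)) + ε * (r - ε) ^ 2 : ℝ) : EReal)) (𝓝[>] 0)
      (𝓝 ((Real.log (‖f w‖ / r) : ℝ) : EReal)) := by
    have h1 := hcont.tendsto
    simp only [sub_zero, one_mul, zero_mul, add_zero] at h1
    exact (continuous_coe_real_ereal.tendsto _).comp (h1.mono_left nhdsWithin_le_nhds)
  refine ge_of_tendsto ht ?_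
  have he : ∀ᶠ ε in 𝓝[>] (0:ℝ), ε < min 1 (r - ‖f w‖) :=
    (eventually_lt_nhds (lt_min one_pos (by linarith))).filter_mono nhdsWithin_le_nhds
  filter_upwards [he, self_mem_nhdsWithin] with ε h1 h2
  have h2 : 0 < ε := h2
  have h3 := h1.trans_le (min_le_left _ _)
  have h4 := h1.trans_le (min_le_right _ _)
  exact key_est hD hu hneg hf hinj hl hball hz hw hfz hpole hs (by linarith) (by linarith) h2 h3 h2

lemma squeezing_radius_le {n : ℕ} (hn : 0 < n) {D : Set (Cn n)} {f : Cn n → Cn n} {r : ℝ}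
    (hmaps : MapsTo f D (ball (0 : Cn n) 1)) (hball : ball (0 : Cn n) r ⊆ f '' D) : r ≤ 1 := by
  by_contra! h
  have hnorm : ‖(EuclideanSpace.single (⟨0, hn⟩ : Fin n) (1:ℂ) : Cn n)‖ = 1 := by simp
  obtain ⟨x, hx, hfx⟩ := hball (show EuclideanSpace.single (⟨0, hn⟩ : Fin n) (1:ℂ) ∈ ball _ r by
    rw [mem_ball_zero_iff, hnorm]; exact h)
  have := hmaps hx
  rw [hfx, mem_ball_zero_iff, hnorm] at this
  exact lt_irrefl _ this

end Final


/-- Localization of the squeezing function via the pluricomplex Green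
function: `σ_{D∩U}(z) ≥ σ_D(z) · inf_{w ∈ D ∩ ∂U} exp(g_D(w,z))`. -/
theorem squeezing_green_localization {n : ℕ} (D : Set (Cn n)) (hD : IsOpen D)
    (hDconn : IsConnected D) (U : Set (Cn n)) (hU : IsOpen U)
    (hDU : (D ∩ U).Nonempty) (hDnU : (D \ U).Nonempty) :
    ∀ z ∈ D ∩ U,
      squeezing (D ∩ U) z ≥
        squeezing D z * sInf ((fun w => erexp (greenFn D w z)) '' (D ∩ frontier U)) := by
  intro z hz
  have hn : 0 < n := by
    rcases Nat.eq_zero_or_pos n with h | h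
    · subst h
      obtain ⟨a, ha⟩ := hDnU
      exact absurd (Subsingleton.elim z a ▸ hz.2) ha.2
    · exact h
  -- the boundary part is nonempty
  have hne : (D ∩ frontier U).Nonempty := by
    by_contra! hemp
    have h1 : D ∩ frontier U = ∅ := by simpa using hemp
    have h2 : D ⊆ U := by
      have := hDconn.isPreconnected.subset_left_of_subset_union hU
        (isClosed_closure (s := U)).isOpen_compl
        (disjoint_compl_right.mono_left subset_closure |>.mono_right le_rfl) (by
          intro x hx
          by_cases hxU : x ∈ U
          · exact Or.inl hxU
          · refine Or.inr fun hxc => ?_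
            have : x ∈ D ∩ frontier U := ⟨hx, by rw [hU.frontier_eq]; exact ⟨hxc, hxU⟩⟩
            rw [h1] at this
            exact this) hDU
      exact this
    obtain ⟨a, ha⟩ := hDnU
    exact ha.2 (h2 ha.1)
  set S := (fun w => erexp (greenFn D w z)) '' (D ∩ frontier U) with hS
  have hSbdd : BddBelow S := ⟨0, by rintro _ ⟨w, _, rfl⟩; exact erexp_nonneg _⟩
  have hm0 : 0 ≤ sInf S := by
    apply Real.sInf_nonneg
    rintro _ ⟨w, _, rfl⟩
    exact erexp_nonneg _
  have hm1 : sInf S ≤ 1 := by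
    obtain ⟨w, hw⟩ := hne
    refine (csInf_le hSbdd ⟨w, hw, rfl⟩).trans ?_
    have : greenFn D w z ≤ ((0 : ℝ) : EReal) := by
      refine sSup_le ?_
      rintro t ⟨u, _, hneg, _, rfl⟩
      exact (hneg z hz.1).le
    simpa using erexp_le this
  have hsq0 : 0 ≤ squeezing (D ∩ U) z := Real.sSup_nonneg fun r hr => hr.1.le
  rcases hm0.eq_or_lt with hm | hm
  · rw [← hm, mul_zero]; exact hsq0
  rw [ge_iff_le, ← le_div_iff₀ hm]
  refine Real.sSup_le ?_ (div_nonneg hsq0 hm.le)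
  rintro r ⟨hr, f, hf, hinj, hmaps, hfz, hball⟩
  rw [le_div_iff₀ hm]
  refine le_csSup ⟨1, ?_⟩ ?_
  · rintro r' ⟨_, f', _, _, hmaps', _, hball'⟩
    exact squeezing_radius_le hn hmaps' hball'
  refine ⟨mul_pos hr hm, f, hf.mono inter_subset_left, hinj.mono inter_subset_left,
    hmaps.mono_left inter_subset_left, hfz, ?_⟩
  set finv := Function.invFunOn f D with hfinvdef
  have hl : ∀ x ∈ D, finv (f x) = x := fun x hx => hinj.leftInvOn_invFunOn hx
  have hsub : ball (0 : Cn n) (r * sInf S) ⊆ ball 0 r :=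
    ball_subset_ball (by nlinarith)
  have hfinv : ∀ y ∈ ball (0 : Cn n) r, finv y ∈ D ∧ f (finv y) = y := by
    intro y hy
    obtain ⟨x, hx, rfl⟩ := hball hy
    rw [hl x hx]
    exact ⟨hx, rfl⟩
  have hconn : IsPreconnected (finv '' ball (0 : Cn n) (r * sInf S)) := by
    refine (convex_ball (0 : Cn n) (r * sInf S)).isPreconnected.image _ ?_
    intro y hy
    obtain ⟨x, hx, rfl⟩ := hball (hsub hy)
    exact (inv_continuousAt hD hf hinj hl hx).continuousWithinAt
  have hsubU : finv '' ball (0 : Cn n) (r * sInf S) ⊆ U := by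
    refine hconn.subset_left_of_subset_union hU (isClosed_closure (s := U)).isOpen_compl
      (disjoint_compl_right.mono_left subset_closure) ?_ ?_
    · rintro _ ⟨y, hy, rfl⟩
      by_cases hyU : finv y ∈ U
      · exact Or.inl hyU
      · refine Or.inr fun hyc => ?_
        obtain ⟨hyD, hfy⟩ := hfinv y (hsub hy)
        have hfr : finv y ∈ frontier U := by rw [hU.frontier_eq]; exact ⟨hyc, hyU⟩
        have hynorm : ‖y‖ < r * sInf S := by simpa using hy
        have hy0 : 0 < ‖y‖ := by
          rw [norm_pos_iff]
          rintro rfl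
          apply hyU
          rw [← hfz, hl z hz.1]
          exact hz.2
        have hg := green_bound hD hf hinj hl hball hz.1 hyD hfz (by rwa [hfy])
          (by rw [hfy]; simpa using hsub hy)
        have h1 := erexp_le hg
        rw [hfy, Real.exp_log (by positivity)] at h1
        have h2 : sInf S ≤ erexp (greenFn D (finv y) z) :=
          csInf_le hSbdd ⟨finv y, ⟨hyD, hfr⟩, rfl⟩
        have h3 := h2.trans h1
        rw [le_div_iff₀ hr] at h3
        linarith
    · refine ⟨z, ⟨0, mem_ball_self (mul_pos hr hm), ?_⟩, hz.2⟩
      rw [← hfz, hl z hz.1]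
  intro y hy
  obtain ⟨hyD, hfy⟩ := hfinv y (hsub hy)
  exact ⟨finv y, ⟨hyD, hsubU ⟨y, hy, rfl⟩⟩, hfy⟩
end
end

section
/- Let D be a bounded hyperconvex domain in ℂⁿ with negative psh exhaustion function φ (that is, φ is psh on D, φ < 0, and φ(z) → 0 as z → ∂D). Then for any compact set K ⊂ D and any compact set L ⊂ ℂⁿ disjoint from K there exists a constant m > 0 such that g_D(z,w) ≥ m φ(w) for all z ∈ K and w ∈ D ∩ L. -/
open Set Metric Filter Topology
open scoped Classical

noncomputable section

def cmean (g : ℝ → ℝ) : ℝ := (1 / (2 * Real.pi)) * ∫ θ in (0:ℝ)..(2 * Real.pi), g θ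

lemma cmean_mono {f g : ℝ → ℝ} (hf : Continuous f) (hg : Continuous g)
    (h : ∀ θ ∈ Icc 0 (2 * Real.pi), f θ ≤ g θ) : cmean f ≤ cmean g := by
  unfold cmean
  have hp : 0 ≤ 2 * Real.pi := by positivity
  apply mul_le_mul_of_nonneg_left _ (by positivity)
  exact intervalIntegral.integral_mono_on hp (hf.intervalIntegrable _ _)
    (hg.intervalIntegrable _ _) h

lemma cmean_add {f g : ℝ → ℝ} (hf : Continuous f) (hg : Continuous g) :
    cmean (fun θ => f θ + g θ) = cmean f + cmean g := by
  unfold cmean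
  rw [intervalIntegral.integral_add (hf.intervalIntegrable _ _) (hg.intervalIntegrable _ _)]
  ring

lemma cmean_const (c : ℝ) : cmean (fun _ => c) = c := by
  unfold cmean
  have := Real.pi_pos
  simp
  field_simp

lemma cmean_mul (c : ℝ) (f : ℝ → ℝ) : cmean (fun θ => c * f θ) = c * cmean f := by
  unfold cmean
  rw [intervalIntegral.integral_const_mul]
  ring

lemma cmean_neg (f : ℝ → ℝ) : cmean (fun θ => - f θ) = - cmean f := by
  unfold cmean
  rw [intervalIntegral.integral_neg]
  ring

lemma cmean_lt {f : ℝ → ℝ} {M : ℝ} (hf : Continuous f) (h : ∀ θ, f θ ≤ M) (h0 : f 0 < M) :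
    cmean f < M := by
  have hp : 0 < 2 * Real.pi := by positivity
  have := intervalIntegral.integral_lt_integral_of_continuousOn_of_le_of_exists_lt hp
    hf.continuousOn (continuousOn_const (c := M)) (fun x _ => h x)
    ⟨0, ⟨le_refl _, hp.le⟩, h0⟩
  rw [← cmean_const M]
  unfold cmean
  exact mul_lt_mul_of_pos_left this (by positivity)

lemma cmean_harmonic {f : ℂ → ℝ} {p : ℂ} {r : ℝ}
    (hf : InnerProductSpace.HarmonicOnNhd f (closedBall p |r|)) :
    cmean (fun θ => f (p + (r : ℂ) * Complex.exp (θ * Complex.I))) = f p := by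
  have := hf.circleAverage_eq
  rw [Real.circleAverage_def] at this
  simp only [circleMap, smul_eq_mul] at this
  unfold cmean
  rw [one_div]
  exact this

lemma cmean_re {f : ℂ → ℂ} (hf : Differentiable ℂ f) (p : ℂ) (r : ℝ) :
    cmean (fun θ => (f (p + (r : ℂ) * Complex.exp (θ * Complex.I))).re) = (f p).re := by
  have : InnerProductSpace.HarmonicOnNhd (fun z => (f z).re) (closedBall p |r|) := by
    intro x _
    exact AnalyticAt.harmonicAt_re (hf.analyticAt x)
  exact cmean_harmonic this

/-- local sub-mean value property -/
def LocSub (w : ℂ → EReal) (p : ℂ) : Prop :=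
  ∃ ε > 0, ∀ ρ : ℝ, 0 < ρ → ρ < ε → ∀ g : ℝ → ℝ, Continuous g →
    (∀ θ : ℝ, w (p + (ρ : ℂ) * Complex.exp (θ * Complex.I)) ≤ (g θ : EReal)) →
    w p ≤ (cmean g : EReal)

lemma max_principle {w : ℂ → EReal} {r : ℝ} (hr : 0 < r)
    (husc : UpperSemicontinuousOn w (closedBall 0 r))
    (htop : ∀ t ∈ closedBall (0:ℂ) r, w t < ⊤)
    (hbd : ∀ t ∈ sphere (0:ℂ) r, w t ≤ 0)
    (hloc : ∀ t ∈ ball (0:ℂ) r, LocSub w t) : w 0 ≤ 0 := by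
  have hcpt : IsCompact (closedBall (0:ℂ) r) := isCompact_closedBall _ _
  obtain ⟨t0, ht0, hmax⟩ := husc.exists_isMaxOn ⟨0, by simp [hr.le]⟩ hcpt
  by_contra hcon
  push Not at hcon
  have hM0 : 0 < w t0 := lt_of_lt_of_le hcon (hmax (by simp [hr.le]))
  obtain ⟨M, hM⟩ : ∃ M : ℝ, w t0 = M := by
    lift w t0 to ℝ using ⟨(htop t0 ht0).ne, (lt_trans EReal.bot_lt_zero hM0).ne'⟩ with M
    exact ⟨M, rfl⟩
  rw [hM] at hM0
  have hS : IsCompact {t ∈ closedBall (0:ℂ) r | (M : EReal) ≤ w t} := by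
    obtain ⟨v, hv, hv'⟩ := (upperSemicontinuousOn_iff_preimage_Ici.mp husc) (M : EReal)
    have : {t ∈ closedBall (0:ℂ) r | (M : EReal) ≤ w t} = closedBall (0:ℂ) r ∩ v := by
      rw [← hv']; rfl
    rw [this]
    exact hcpt.inter_right hv
  obtain ⟨p, hpS, hp⟩ := hS.exists_isMaxOn ⟨t0, ht0, hM.ge⟩ Complex.continuous_re.continuousOn
  have hle : ∀ t ∈ closedBall (0:ℂ) r, w t ≤ M := fun t ht => hM ▸ hmax ht
  have hpr : p ∈ ball (0:ℂ) r := by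
    have h1 := hpS.1
    simp only [mem_closedBall, dist_zero_right, mem_ball] at h1 ⊢
    rcases h1.lt_or_eq with h | h
    · exact h
    · exact absurd (lt_of_lt_of_le hM0 (hpS.2.trans (hbd p (by simpa using h)))) (lt_irrefl _)
  obtain ⟨ε, hε, hsub⟩ := hloc p hpr
  have hpr' : ‖p‖ < r := by simpa using hpr
  obtain ⟨ρ, hρ0, hρ⟩ := exists_between (lt_min hε (sub_pos.2 hpr'))
  have hρε := hρ.trans_le (min_le_left _ _)
  have hρr := hρ.trans_le (min_le_right _ _)
  have hcirc : ∀ θ : ℝ, p + (ρ : ℂ) * Complex.exp (θ * Complex.I) ∈ closedBall (0:ℂ) r := by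
    intro θ
    simp only [mem_closedBall, dist_zero_right]
    calc _ ≤ ‖p‖ + ‖(ρ : ℂ) * Complex.exp (θ * Complex.I)‖ := norm_add_le _ _
      _ = ‖p‖ + ρ := by simp [Complex.norm_exp_ofReal_mul_I, abs_of_pos hρ0]
      _ ≤ r := by linarith
  have hq : p + ρ ∈ closedBall (0:ℂ) r := by simpa using hcirc 0
  have hqM : w (p + ρ) < M := by
    by_contra h
    push Not at h
    have := hp ⟨hq, h⟩
    simp at this
    linarith
  obtain ⟨c, hc1, hc2⟩ := EReal.lt_iff_exists_real_btwn.mp hqM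
  have hc2 : c < M := by exact_mod_cast hc2
  have hev := husc (p + ρ) hq c hc1
  rw [Filter.Eventually, Metric.mem_nhdsWithin_iff] at hev
  obtain ⟨η, hη, hball⟩ := hev
  set d : ℝ → ℝ := fun θ => dist (p + (ρ : ℂ) * Complex.exp (θ * Complex.I)) (p + ρ) with hd
  have hdc : Continuous d := by rw [hd]; fun_prop
  set g : ℝ → ℝ := fun θ => M - (M - c) * max 0 (1 - d θ / η) with hg
  have hgc : Continuous g := by rw [hg]; fun_prop
  have hgM : ∀ θ, g θ ≤ M := by
    intro θ
    have : 0 ≤ (M - c) * max 0 (1 - d θ / η) := mul_nonneg (by linarith) (le_max_left _ _)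
    simp only [hg]; linarith
  have hg0 : g 0 < M := by
    simp only [hg, hd]
    simp
    linarith
  have hwg : ∀ θ : ℝ, w (p + (ρ : ℂ) * Complex.exp (θ * Complex.I)) ≤ (g θ : EReal) := by
    intro θ
    by_cases h : d θ < η
    · have h1 : w (p + (ρ : ℂ) * Complex.exp (θ * Complex.I)) < c := hball ⟨h, hcirc θ⟩
      refine h1.le.trans ?_
      have h0 : 0 ≤ d θ / η := div_nonneg dist_nonneg hη.le
      have h2 : max 0 (1 - d θ / η) ≤ 1 := max_le zero_le_one (by linarith)
      have : (M - c) * max 0 (1 - d θ / η) ≤ (M - c) * 1 :=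
        mul_le_mul_of_nonneg_left h2 (by linarith)
      have : c ≤ g θ := by simp only [hg]; linarith
      exact_mod_cast this
    · have h2 : max 0 (1 - d θ / η) = 0 := by
        apply max_eq_left
        have : 1 ≤ d θ / η := by rw [le_div_iff₀ hη]; linarith
        linarith
      have : g θ = M := by simp only [hg, h2]; ring
      rw [this]
      exact hle _ (hcirc θ)
  have h1 := hpS.2.trans (hsub ρ hρ0 hρε g hgc hwg)
  have h2 : M ≤ cmean g := by exact_mod_cast h1
  have := cmean_lt hgc hgM hg0
  linarith

lemma cmean_pow (N : ℕ) :
    cmean (fun θ => (1 - θ / (2 * Real.pi)) ^ N) = 1 / (N + 1) := by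
  unfold cmean
  have hp : (2 * Real.pi) ≠ 0 := by positivity
  have := intervalIntegral.integral_comp_sub_div (a := 0) (b := 2 * Real.pi)
    (fun x : ℝ => x ^ N) hp 1
  rw [this]
  rw [integral_pow]
  simp [hp]
  field_simp

/-- replace a continuous majorant by a periodic one -/
lemma periodize {g : ℝ → ℝ} (hg : Continuous g) {v : ℝ → EReal}
    (hv : Function.Periodic v (2 * Real.pi)) (hvg : ∀ θ, v θ ≤ (g θ : EReal))
    {ε : ℝ} (hε : 0 < ε) :
    ∃ G : ℝ → ℝ, Continuous G ∧ G 0 = G (2 * Real.pi) ∧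
      (∀ θ ∈ Icc 0 (2 * Real.pi), v θ ≤ (G θ : EReal)) ∧ cmean G ≤ cmean g + ε := by
  have hp : 0 < 2 * Real.pi := by positivity
  obtain ⟨C, hC⟩ := (isCompact_Icc (a := 0) (b := 2 * Real.pi)).exists_bound_of_continuousOn
    (f := fun θ => g (θ + 2 * Real.pi) - g θ) (by fun_prop)
  have hC0 : 0 ≤ C := (norm_nonneg _).trans (hC 0 ⟨le_refl _, hp.le⟩)
  obtain ⟨N, hN⟩ := exists_nat_gt (C / ε)
  set χ : ℝ → ℝ := fun θ => (1 - θ / (2 * Real.pi)) ^ (N + 1) with hχ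
  have hχc : Continuous χ := by rw [hχ]; fun_prop
  have hχ01 : ∀ θ ∈ Icc 0 (2 * Real.pi), 0 ≤ χ θ ∧ χ θ ≤ 1 := by
    intro θ hθ
    have h1 : 0 ≤ θ / (2 * Real.pi) := div_nonneg hθ.1 hp.le
    have h2 : θ / (2 * Real.pi) ≤ 1 := by rw [div_le_one hp]; exact hθ.2
    exact ⟨pow_nonneg (by linarith) _, pow_le_one₀ (by linarith) (by linarith)⟩
  refine ⟨fun θ => g θ + χ θ * (g (θ + 2 * Real.pi) - g θ), by fun_prop, ?_, ?_, ?_⟩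
  · simp [hχ, hp.ne']
  · intro θ hθ
    obtain ⟨h0, h1⟩ := hχ01 θ hθ
    have ha := hvg θ
    have hb := hvg (θ + 2 * Real.pi)
    rw [hv] at hb
    have : v θ ≤ ((min (g θ) (g (θ + 2 * Real.pi)) : ℝ) : EReal) := by
      rcases min_choice (g θ) (g (θ + 2 * Real.pi)) with h | h <;> rw [h] <;> assumption
    refine this.trans ?_
    norm_cast
    have e1 := min_le_left (g θ) (g (θ + 2 * Real.pi))
    have e2 := min_le_right (g θ) (g (θ + 2 * Real.pi))
    nlinarith [mul_nonneg h0 (sub_nonneg.2 e2), mul_nonneg (sub_nonneg.2 h1) (sub_nonneg.2 e1)]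
  · have h1 : cmean (fun θ => g θ + χ θ * (g (θ + 2 * Real.pi) - g θ)) ≤
        cmean (fun θ => g θ + C * χ θ) := by
      apply cmean_mono (by fun_prop) (by fun_prop)
      intro θ hθ
      obtain ⟨h0, h1⟩ := hχ01 θ hθ
      have := (le_abs_self _).trans (hC θ hθ)
      nlinarith
    refine h1.trans ?_
    rw [cmean_add hg (by fun_prop), cmean_mul, hχ, cmean_pow]
    have : C * (1 / ((N + 1 : ℕ) + 1)) ≤ ε := by
      rw [div_lt_iff₀ hε] at hN
      rw [mul_one_div, div_le_iff₀ (by positivity)]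
      push_cast
      nlinarith
    linarith

lemma trig_re (P : C(AddCircle (2 * Real.pi), ℂ))
    (hP : P ∈ Submodule.span ℂ (range (@fourier (2 * Real.pi)))) :
    ∀ c : ℂ, ∃ Q : Polynomial ℂ, ∀ θ : ℝ,
      (c * P (θ : AddCircle (2 * Real.pi))).re = (Q.eval (Complex.exp (θ * Complex.I))).re := by
  induction hP using Submodule.span_induction with
  | mem x hx =>
    obtain ⟨n, rfl⟩ := hx
    intro c
    have key : ∀ θ : ℝ, (fourier n (θ : AddCircle (2 * Real.pi)) : ℂ)
        = Complex.exp (n * (θ * Complex.I)) := by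
      intro θ
      rw [fourier_coe_apply]
      congr 1
      have : (Real.pi : ℂ) ≠ 0 := by exact_mod_cast Real.pi_ne_zero
      push_cast
      field_simp
    obtain ⟨k, rfl | rfl⟩ := n.eq_nat_or_neg
    · refine ⟨Polynomial.C c * Polynomial.X ^ k, fun θ => ?_⟩
      rw [key]
      simp [← Complex.exp_nat_mul]
    · refine ⟨Polynomial.C ((starRingEnd ℂ) c) * Polynomial.X ^ k, fun θ => ?_⟩
      rw [key, ← Complex.conj_re]
      simp [← Complex.exp_nat_mul, ← Complex.exp_conj]
  | zero => exact fun c => ⟨0, fun θ => by simp⟩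
  | add x y _ _ hx hy =>
    intro c
    obtain ⟨Q1, h1⟩ := hx c
    obtain ⟨Q2, h2⟩ := hy c
    refine ⟨Q1 + Q2, fun θ => ?_⟩
    simp only [ContinuousMap.add_apply, mul_add, Complex.add_re, Polynomial.eval_add, h1, h2]
  | smul a x _ hx =>
    intro c
    obtain ⟨Q1, h1⟩ := hx (c * a)
    refine ⟨Q1, fun θ => ?_⟩
    rw [← h1]
    simp [mul_assoc]

lemma poly_majorant {g : ℝ → ℝ} (hg : Continuous g) {v : ℝ → EReal}
    (hv : Function.Periodic v (2 * Real.pi)) (hvg : ∀ θ, v θ ≤ (g θ : EReal))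
    {ε : ℝ} (hε : 0 < ε) :
    ∃ Q : Polynomial ℂ,
      (∀ θ : ℝ, v θ ≤ ((Q.eval (Complex.exp (θ * Complex.I))).re : EReal)) ∧
      (Q.eval 0).re ≤ cmean g + ε := by
  have hp : 0 < 2 * Real.pi := by positivity
  have : Fact (0 < 2 * Real.pi) := ⟨hp⟩
  obtain ⟨G, hGc, hG0, hGv, hGm⟩ := periodize hg hv hvg (half_pos hε)
  have hFc : Continuous (AddCircle.liftIco (2 * Real.pi) 0 (fun θ => (G θ : ℂ))) := by
    apply AddCircle.liftIco_continuous
    · simp [hG0]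
    · fun_prop
  set F : C(AddCircle (2 * Real.pi), ℂ) := ⟨_, hFc⟩ with hF
  have hFm : F ∈ (Submodule.span ℂ (range (@fourier (2 * Real.pi)))).topologicalClosure := by
    rw [span_fourier_closure_eq_top]; trivial
  obtain ⟨P, hPs, hPd⟩ := Metric.mem_closure_iff.mp hFm (ε / 4) (by linarith)
  obtain ⟨Q, hQ⟩ := trig_re P hPs 1
  have hFG : ∀ θ ∈ Ico 0 (2 * Real.pi), F (θ : AddCircle (2 * Real.pi)) = G θ := by
    intro θ hθ
    exact AddCircle.liftIco_coe_apply (p := 2 * Real.pi) (a := 0) (f := fun θ => (G θ : ℂ))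
      (by simpa using hθ)
  have hclose : ∀ θ ∈ Ico 0 (2 * Real.pi),
      |G θ - (Q.eval (Complex.exp (θ * Complex.I))).re| ≤ ε / 4 := by
    intro θ hθ
    rw [← hQ, one_mul]
    have h1 := (ContinuousMap.dist_apply_le_dist (f := F) (g := P) (θ : AddCircle (2 * Real.pi)))
    rw [hFG θ hθ, dist_eq_norm] at h1
    have h2 := Complex.abs_re_le_norm ((G θ : ℂ) - P (θ : AddCircle (2 * Real.pi)))
    simp only [Complex.sub_re, Complex.ofReal_re] at h2
    linarith
  have hQc : Continuous (fun θ : ℝ => (Q.eval (Complex.exp (θ * Complex.I))).re) := by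
    fun_prop
  have hclose' : ∀ θ ∈ Icc 0 (2 * Real.pi),
      |G θ - (Q.eval (Complex.exp (θ * Complex.I))).re| ≤ ε / 4 := by
    intro θ hθ
    rcases hθ.2.lt_or_eq with h | h
    · exact hclose θ ⟨hθ.1, h⟩
    · have := hclose 0 ⟨le_refl _, hp⟩
      rw [hG0] at this
      subst h
      simpa using this
  refine ⟨Q + Polynomial.C ((ε / 4 : ℝ) : ℂ), ?_, ?_⟩
  · have hper : Function.Periodic
        (fun θ : ℝ => (((Q + Polynomial.C ((ε / 4 : ℝ) : ℂ)).eval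
          (Complex.exp (θ * Complex.I))).re : EReal)) (2 * Real.pi) := by
      intro θ
      have : Complex.exp (((θ + 2 * Real.pi : ℝ) : ℂ) * Complex.I)
          = Complex.exp (θ * Complex.I) := by
        push_cast
        rw [add_mul, Complex.exp_add, Complex.exp_two_pi_mul_I, mul_one]
      simp only [this]
    intro θ
    obtain ⟨y, hy, hy'⟩ := Function.Periodic.exists_mem_Ico₀
      (f := fun θ : ℝ => (v θ, (((Q + Polynomial.C ((ε / 4 : ℝ) : ℂ)).eval
          (Complex.exp (θ * Complex.I))).re : EReal))) (c := 2 * Real.pi)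
      (fun x => Prod.ext (hv x) (hper x)) hp θ
    obtain ⟨e1, e2⟩ := Prod.mk.inj hy'
    rw [e1, e2]
    have hy2 : y ∈ Icc 0 (2 * Real.pi) := ⟨hy.1, hy.2.le⟩
    refine (hGv y hy2).trans ?_
    have := (abs_le.1 (hclose' y hy2)).2
    simp only [Polynomial.eval_add, Polynomial.eval_C, Complex.add_re, Complex.ofReal_re]
    exact_mod_cast (by linarith)
  · have h1 := cmean_re (f := fun z => Q.eval z) Q.differentiable 0 1
    have h2 : cmean (fun θ : ℝ => (Q.eval (Complex.exp (θ * Complex.I))).re) ≤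
        cmean (fun θ => G θ + ε / 4) := by
      apply cmean_mono hQc (by fun_prop)
      intro θ hθ
      have := (abs_le.1 (hclose' θ hθ)).1
      linarith
    rw [cmean_add hGc continuous_const, cmean_const] at h2
    simp only [Complex.ofReal_one, one_mul, zero_add] at h1
    simp only [Polynomial.eval_add, Polynomial.eval_C, Complex.add_re, Complex.ofReal_re]
    linarith

/-- a locally psh function is psh -/
lemma psh_of_local {n : ℕ} {u : Cn n → EReal} {D : Set (Cn n)}
    (husc : UpperSemicontinuousOn u D) (htop : ∀ x ∈ D, u x < ⊤)
    (hloc : ∀ x ∈ D, ∀ b : Cn n, LocSub (fun t => u (x + t • b)) 0) : PSHOn u D := by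
  refine ⟨husc, ?_⟩
  intro a ha b r hr hdisc g hg hug
  change u a ≤ (cmean g : EReal)
  apply EReal.le_of_forall_lt_iff_le.1
  intro z hz
  have hz : cmean g < z := by exact_mod_cast hz
  obtain ⟨Q, hQ, hQ0⟩ := poly_majorant hg
    (v := fun θ => u (a + ((r : ℂ) * Complex.exp (θ * Complex.I)) • b)) (by
      intro θ
      have : Complex.exp (((θ + 2 * Real.pi : ℝ) : ℂ) * Complex.I)
          = Complex.exp (θ * Complex.I) := by
        push_cast
        rw [add_mul, Complex.exp_add, Complex.exp_two_pi_mul_I, mul_one]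
      simp only [this]) hug (sub_pos.2 hz)
  set h : ℂ → ℝ := fun t => (Q.eval (t / r)).re with hh
  have hQd : Differentiable ℂ (fun t : ℂ => Q.eval (t / r)) :=
    Q.differentiable.comp (differentiable_id.div_const _)
  have hhc : Continuous h := by
    exact Complex.continuous_re.comp hQd.continuous
  set w : ℂ → EReal := fun t => u (a + t • b) + ((- h t : ℝ) : EReal) with hw
  have hmaps : MapsTo (fun t : ℂ => a + t • b) (closedBall 0 r) D := by
    intro t ht
    exact hdisc t (by simpa using ht)
  have hw0 : w 0 ≤ 0 := by
    apply max_principle hr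
    · intro t ht
      have h1 : UpperSemicontinuousWithinAt (fun t : ℂ => u (a + t • b)) (closedBall 0 r) t := by
        have := husc.comp (g := fun t : ℂ => a + t • b) (t := closedBall 0 r)
          (by fun_prop) hmaps
        exact this t ht
      refine h1.add' ?_ ?_
      · exact (continuous_coe_real_ereal.comp
          (continuous_neg.comp hhc)).upperSemicontinuous.upperSemicontinuousWithinAt _ _
      · apply EReal.continuousAt_add
        · right; exact EReal.coe_ne_bot _
        · right; exact EReal.coe_ne_top _
    · intro t ht
      exact EReal.add_lt_top (htop _ (hmaps ht)).ne (EReal.coe_ne_top _)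
    · intro t ht
      have ht' : ‖t‖ = r := by simpa using ht
      have e : t = (r : ℂ) * Complex.exp (t.arg * Complex.I) := by
        rw [← ht']; exact (Complex.norm_mul_exp_arg_mul_I t).symm
      have h1 := hQ t.arg
      have hr' : (r : ℂ) ≠ 0 := by exact_mod_cast hr.ne'
      have h2 : Complex.exp (t.arg * Complex.I) = t / r := by
        field_simp; rw [mul_comm]; exact e.symm
      rw [← e, h2] at h1
      have h3 : w t ≤ (h t : EReal) + ((- h t : ℝ) : EReal) := add_le_add h1 le_rfl
      refine h3.trans ?_
      norm_cast
      simp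
    · intro t ht
      have htc := ball_subset_closedBall ht
      obtain ⟨ε, hε, hsub⟩ := hloc _ (hmaps htc) b
      refine ⟨ε, hε, fun ρ hρ0 hρ G hG hwG => ?_⟩
      have hm := cmean_re hQd t ρ
      have hc2 : Continuous (fun θ : ℝ => h (t + (ρ : ℂ) * Complex.exp (θ * Complex.I))) := by
        fun_prop
      have := hsub ρ hρ0 hρ (fun θ => G θ + h (t + (ρ : ℂ) * Complex.exp (θ * Complex.I)))
        (hG.add hc2) (by
          intro θ
          have := hwG θ
          simp only [hw] at this
          simp only [zero_add, add_assoc, ← add_smul]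
          have h4 := add_le_add this
            (le_refl ((h (t + (ρ : ℂ) * Complex.exp (θ * Complex.I)) : ℝ) : EReal))
          rw [add_assoc, ← EReal.coe_add, neg_add_cancel, EReal.coe_zero, add_zero] at h4
          rw [EReal.coe_add]
          exact h4)
      rw [cmean_add hG hc2] at this
      change cmean (fun θ : ℝ => h (t + (ρ : ℂ) * Complex.exp (θ * Complex.I))) = h t at hm
      simp only [hm, zero_smul, add_zero, EReal.coe_add] at this
      have h5 := add_le_add this (le_refl ((- h t : ℝ) : EReal))
      rw [add_assoc, ← EReal.coe_add, add_neg_cancel, EReal.coe_zero, add_zero] at h5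
      exact h5
  simp only [hw, zero_smul, add_zero] at hw0
  have h5 := add_le_add hw0 (le_refl ((h 0 : ℝ) : EReal))
  rw [add_assoc, ← EReal.coe_add, neg_add_cancel, EReal.coe_zero, add_zero, zero_add] at h5
  refine h5.trans ?_
  have : h 0 ≤ z := by
    simp only [hh, zero_div]; linarith
  exact_mod_cast this

lemma LocSub.congr {v w : ℂ → EReal} (h : LocSub v 0) (he : v =ᶠ[𝓝 0] w) : LocSub w 0 := by
  obtain ⟨ε, hε, hs⟩ := h
  obtain ⟨ε', hε', hb⟩ := Metric.eventually_nhds_iff.1 he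
  refine ⟨min ε ε', lt_min hε hε', fun ρ hρ0 hρ g hg hw => ?_⟩
  rw [← hb (by simpa using hε')]
  refine hs ρ hρ0 (hρ.trans_le (min_le_left _ _)) g hg fun θ => ?_
  rw [hb]
  · exact hw θ
  · simp only [zero_add, dist_zero_right, norm_mul, Complex.norm_exp_ofReal_mul_I, mul_one,
      Complex.norm_real, Real.norm_eq_abs, abs_of_pos hρ0]
    exact hρ.trans_le (min_le_right _ _)

lemma LocSub.max {v w : ℂ → EReal} (h : LocSub v 0) (h' : LocSub w 0) :
    LocSub (fun t => max (v t) (w t)) 0 := by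
  obtain ⟨ε, hε, hs⟩ := h
  obtain ⟨ε', hε', hs'⟩ := h'
  refine ⟨min ε ε', lt_min hε hε', fun ρ hρ0 hρ g hg hw => ?_⟩
  exact max_le
    (hs ρ hρ0 (hρ.trans_le (min_le_left _ _)) g hg fun θ => (le_max_left _ _).trans (hw θ))
    (hs' ρ hρ0 (hρ.trans_le (min_le_right _ _)) g hg fun θ => (le_max_right _ _).trans (hw θ))

/-- the logarithm of the normalized distance -/
def ell {n : ℕ} (z : Cn n) (R : ℝ) (x : Cn n) : EReal :=
  ENNReal.log (ENNReal.ofReal (‖x - z‖ / R))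

lemma ell_continuous {n : ℕ} (z : Cn n) (R : ℝ) : Continuous (ell z R) := by
  unfold ell
  apply ENNReal.continuous_log.comp
  apply ENNReal.continuous_ofReal.comp
  fun_prop

lemma ell_of_ne {n : ℕ} {z : Cn n} {R : ℝ} (hR : 0 < R) {x : Cn n} (h : x ≠ z) :
    ell z R x = ((Real.log (‖x - z‖ / R) : ℝ) : EReal) :=
  ENNReal.log_ofReal_of_pos (div_pos (norm_pos_iff.2 (sub_ne_zero.2 h)) hR)

lemma ell_self {n : ℕ} {z : Cn n} {R : ℝ} : ell z R z = ⊥ := by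
  simp [ell]

lemma ell_locSub {n : ℕ} {z : Cn n} {R : ℝ} (hR : 0 < R) (x b : Cn n) :
    LocSub (fun t => ell z R (x + t • b)) 0 := by
  by_cases hx : x = z
  · subst hx
    refine ⟨1, one_pos, fun ρ _ _ g _ _ => ?_⟩
    simp [ell_self]
  have hy : 0 < ‖x - z‖ := norm_pos_iff.2 (sub_ne_zero.2 hx)
  set y := x - z with hydef
  set F : ℂ → ℂ := fun t => inner ℂ y (y + t • b) / ((‖y‖ * R : ℝ) : ℂ) with hF
  have hFe : F = fun t => (inner ℂ y y + t * inner ℂ y b) / ((‖y‖ * R : ℝ) : ℂ) := by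
    funext t
    simp only [hF, inner_add_right, inner_smul_right]
  have hFd : Differentiable ℂ F := by
    rw [hFe]; fun_prop
  have hF0 : ‖F 0‖ = ‖y‖ / R := by
    rw [hFe]
    simp only [zero_mul, add_zero, norm_div, Complex.norm_real, norm_mul,
      inner_self_eq_norm_sq_to_K, Real.norm_eq_abs, abs_of_pos hR]
    simp
    field_simp
  have hle : ∀ t, ‖F t‖ ≤ ‖x + t • b - z‖ / R := by
    intro t
    have h1 := norm_inner_le_norm (𝕜 := ℂ) y (y + t • b)
    have h2 : x + t • b - z = y + t • b := by rw [hydef]; abel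
    have h3 : ‖F t‖ = ‖inner ℂ y (y + t • b)‖ / (‖y‖ * R) := by
      simp only [hF, norm_div, Complex.norm_real, Real.norm_eq_abs, abs_mul, abs_norm,
        abs_of_pos hR]
    rw [h2, h3, div_le_div_iff₀ (by positivity) hR]
    nlinarith
  have hF0' : F 0 ≠ 0 := by
    rw [← norm_pos_iff, hF0]; positivity
  obtain ⟨ε, hε, hb⟩ := Metric.eventually_nhds_iff.1
    (hFd.continuous.continuousAt.eventually_ne hF0')
  refine ⟨ε, hε, fun ρ hρ0 hρ g hg hw => ?_⟩
  have hnz : ∀ t ∈ closedBall (0:ℂ) |ρ|, F t ≠ 0 := by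
    intro t ht
    rw [abs_of_pos hρ0] at ht
    exact hb (lt_of_le_of_lt ht hρ)
  have hmem : ∀ θ : ℝ, (0:ℂ) + (ρ : ℂ) * Complex.exp (θ * Complex.I) ∈ closedBall (0:ℂ) |ρ| := by
    intro θ
    simp [Complex.norm_exp_ofReal_mul_I]
  have hm := cmean_harmonic (f := fun t => Real.log ‖F t‖) (p := 0) (r := ρ)
    (fun t ht => (hFd.analyticAt t).harmonicAt_log_norm (hnz t ht))
  have hcont : Continuous (fun θ : ℝ =>
      Real.log ‖F ((0:ℂ) + (ρ : ℂ) * Complex.exp (θ * Complex.I))‖) := by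
    apply Continuous.log
    · exact (hFd.continuous.comp (by fun_prop)).norm
    · intro θ
      exact norm_ne_zero_iff.2 (hnz _ (hmem θ))
  have hcm : cmean (fun θ : ℝ =>
      Real.log ‖F ((0:ℂ) + (ρ : ℂ) * Complex.exp (θ * Complex.I))‖) ≤ cmean g := by
    apply cmean_mono hcont hg
    intro θ _
    have h1 := hw θ
    have hpos : 0 < ‖F ((0:ℂ) + (ρ : ℂ) * Complex.exp (θ * Complex.I))‖ :=
      norm_pos_iff.2 (hnz _ (hmem θ))
    have h2 := hle ((0:ℂ) + (ρ : ℂ) * Complex.exp (θ * Complex.I))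
    simp only [ell] at h1
    rw [ENNReal.log_ofReal_of_pos (hpos.trans_le h2)] at h1
    exact (Real.log_le_log hpos h2).trans (by exact_mod_cast h1)
  rw [hm] at hcm
  simp only [zero_smul, add_zero]
  rw [ell_of_ne hR hx, ← hydef, ← hF0]
  exact_mod_cast hcm

lemma mul_locSub {n : ℕ} {D : Set (Cn n)} (hD : IsOpen D) {φ : Cn n → EReal} (hφ : PSHOn φ D)
    {m : ℝ} (hm : 0 < m) {x : Cn n} (hx : x ∈ D) (b : Cn n) :
    LocSub (fun t => (m : EReal) * φ (x + t • b)) 0 := by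
  have hc : ContinuousAt (fun t : ℂ => x + t • b) 0 := by fun_prop
  have hmp : (0 : EReal) < (m : EReal) := by exact_mod_cast hm
  obtain ⟨ε, hε, hb⟩ := Metric.eventually_nhds_iff.1
    (hc.eventually_mem (hD.mem_nhds (by simpa using hx)))
  refine ⟨ε, hε, fun ρ hρ0 hρ g hg hw => ?_⟩
  have := hφ.2 x hx b ρ hρ0 (fun t ht => hb (by simpa using lt_of_le_of_lt ht hρ))
    (fun θ => m⁻¹ * g θ) (by fun_prop) (by
      intro θ
      have := hw θ
      beta_reduce at this
      rw [zero_add, mul_comm (m : EReal), ← EReal.le_div_iff_mul_le hmp (EReal.coe_ne_top _)]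
        at this
      rw [mul_comm m⁻¹, ← div_eq_mul_inv, EReal.coe_div]
      exact this)
  change _ ≤ ((cmean fun θ => m⁻¹ * g θ : ℝ) : EReal) at this
  rw [cmean_mul, mul_comm, ← div_eq_mul_inv, EReal.coe_div,
    EReal.le_div_iff_mul_le hmp (EReal.coe_ne_top _), mul_comm] at this
  simpa using this

lemma mul_usc {n : ℕ} {D : Set (Cn n)} {φ : Cn n → EReal} (hφ : UpperSemicontinuousOn φ D)
    {m : ℝ} (hm : 0 < m) : UpperSemicontinuousOn (fun x => (m : EReal) * φ x) D := by
  have hmp : (0 : EReal) < (m : EReal) := by exact_mod_cast hm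
  have hc : Continuous (fun x : EReal => (m : EReal) * x) := by
    rw [continuous_iff_continuousAt]
    intro x
    have h := EReal.continuousAt_mul (p := ((m : EReal), x)) (Or.inl hmp.ne') (Or.inl hmp.ne')
      (Or.inl (EReal.coe_ne_bot _)) (Or.inl (EReal.coe_ne_top _))
    exact ContinuousAt.comp (f := fun x : EReal => ((m : EReal), x)) h (by fun_prop)
  exact hc.comp_upperSemicontinuousOn hφ (fun a b hab => mul_le_mul_of_nonneg_left hab hmp.le)
/-- Lower bound for the pluricomplex Green function of a bounded
hyperconvex domain in terms of a negative psh exhaustion function. -/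
theorem green_lower_bound_hyperconvex {n : ℕ} (D : Set (Cn n)) (hD : IsOpen D)
    (hDconn : IsConnected D) (hDb : Bornology.IsBounded D)
    (φ : Cn n → EReal) (hφ : PSHOn φ D) (hφneg : ∀ x ∈ D, φ x < 0)
    (hexh : ∀ ε : ℝ, 0 < ε → ∃ K' : Set (Cn n), IsCompact K' ∧ K' ⊆ D ∧
      ∀ z ∈ D \ K', ((-ε : ℝ) : EReal) < φ z)
    (K L : Set (Cn n)) (hK : IsCompact K) (hKD : K ⊆ D) (hL : IsCompact L)
    (hKL : Disjoint K L) :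
    ∃ m : ℝ, 0 < m ∧ ∀ z ∈ K, ∀ w ∈ D ∩ L,
      greenFn D z w ≥ (m : EReal) * φ w := by
  rcases K.eq_empty_or_nonempty with hKe | hKne
  · exact ⟨1, one_pos, fun z hz => by simp [hKe] at hz⟩
  obtain ⟨δ, hδ, hδs⟩ := hK.exists_cthickening_subset_open (hD.inter hL.isClosed.isOpen_compl)
    (fun x hx => ⟨hKD hx, disjoint_left.1 hKL hx⟩)
  have hTc : IsCompact (cthickening δ K) := hK.cthickening
  have hTD : cthickening δ K ⊆ D := fun x hx => (hδs hx).1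
  obtain ⟨x0, hx0, hmax⟩ := UpperSemicontinuousOn.exists_isMaxOn
    (hKne.mono (self_subset_cthickening K)) hTc (hφ.1.mono hTD)
  obtain ⟨c, hc1, hc2⟩ := EReal.lt_iff_exists_real_btwn.mp (hφneg x0 (hTD hx0))
  have hc2 : c < 0 := by exact_mod_cast hc2
  have hφc : ∀ x ∈ cthickening δ K, φ x ≤ c := fun x hx => (hmax hx).trans hc1.le
  obtain ⟨R, hR, hRD⟩ : ∃ R : ℝ, 0 < R ∧ ∀ x ∈ D, ∀ z ∈ D, ‖x - z‖ < R := by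
    obtain ⟨C, hC⟩ := hDb.exists_norm_le
    refine ⟨|C| + |C| + 1, by positivity, fun x hx z hz => ?_⟩
    have h1 := norm_sub_le x z
    have h2 := (hC x hx).trans (le_abs_self C)
    have h3 := (hC z hz).trans (le_abs_self C)
    linarith
  set A : ℝ := |Real.log (δ / 2 / R)| + 1 with hA
  have hApos : 0 < A := by positivity
  refine ⟨A / (-c), div_pos hApos (by linarith), ?_⟩
  set m : ℝ := A / (-c) with hmdef
  have hm : 0 < m := div_pos hApos (by linarith)
  have hmp : (0 : EReal) < (m : EReal) := by exact_mod_cast hm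
  intro z hz w hw
  have hzD := hKD hz
  have hnear : ∀ x, ‖x - z‖ ≤ δ → x ∈ cthickening δ K := by
    intro x hx
    exact mem_cthickening_of_dist_le x z δ K hz (by rwa [dist_eq_norm])
  have hmφ : ∀ x, ‖x - z‖ ≤ δ → δ / 2 ≤ ‖x - z‖ → (m : EReal) * φ x ≤ ell z R x := by
    intro x hx1 hx2
    have h1 : (m : EReal) * φ x ≤ (m : EReal) * (c : EReal) :=
      mul_le_mul_of_nonneg_left (hφc x (hnear x hx1)) hmp.le
    have hxz : x ≠ z := by
      rintro rfl
      simp at hx2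
      linarith
    rw [ell_of_ne hR hxz]
    refine h1.trans ?_
    have h2 : m * c = -A := by
      have := hc2.ne
      rw [hmdef]; field_simp
    have h3 : Real.log (δ / 2 / R) ≤ Real.log (‖x - z‖ / R) :=
      Real.log_le_log (by positivity) (by gcongr)
    have h4 := neg_abs_le (Real.log (δ / 2 / R))
    have h5 : m * c ≤ Real.log (‖x - z‖ / R) := by linarith
    exact_mod_cast h5
  set u : Cn n → EReal := fun x =>
    if ‖x - z‖ < δ then ell z R x else max (ell z R x) ((m : EReal) * φ x) with hu
  have hu1 : ∀ x, ‖x - z‖ < δ → u x = ell z R x := fun x hx => by simp [hu, hx]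
  have hu2 : ∀ x, δ / 2 < ‖x - z‖ → u x = max (ell z R x) ((m : EReal) * φ x) := by
    intro x hx
    by_cases h : ‖x - z‖ < δ
    · rw [hu1 x h, max_eq_left (hmφ x h.le hx.le)]
    · simp [hu, h]
  have hcn : Continuous (fun x : Cn n => ‖x - z‖) := by fun_prop
  have hloc : ∀ x, (u =ᶠ[𝓝 x] ell z R) ∨
      (u =ᶠ[𝓝 x] fun x => max (ell z R x) ((m : EReal) * φ x)) := by
    intro x
    by_cases h : ‖x - z‖ < δ
    · left
      filter_upwards [hcn.continuousAt.eventually_lt continuousAt_const h] with y hy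
      exact hu1 y hy
    · right
      have h' : δ / 2 < ‖x - z‖ := by linarith
      filter_upwards [continuousAt_const.eventually_lt hcn.continuousAt h'] with y hy
      exact hu2 y hy
  have hline : ∀ x b : Cn n, Tendsto (fun t : ℂ => x + t • b) (𝓝 0) (𝓝 x) := by
    intro x b
    have : ContinuousAt (fun t : ℂ => x + t • b) 0 := by fun_prop
    simpa [ContinuousAt] using this
  have hneg : ∀ x ∈ D, u x < 0 := by
    intro x hx
    have h1 : ell z R x < 0 := by
      rw [ell, ENNReal.log_lt_zero_iff, ENNReal.ofReal_lt_one, div_lt_one hR]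
      exact hRD x hx z hzD
    have h2 : (m : EReal) * φ x < 0 := by
      have := EReal.mul_neg_iff (a := (m : EReal)) (b := φ x)
      exact this.2 (Or.inl ⟨hmp, hφneg x hx⟩)
    simp only [hu]
    split_ifs
    · exact h1
    · exact max_lt h1 h2
  have hell : ∀ x, UpperSemicontinuousWithinAt (ell z R) D x := fun x =>
    (ell_continuous z R).upperSemicontinuous.upperSemicontinuousWithinAt _ _
  have hpsh : PSHOn u D := by
    apply psh_of_local
    · intro x hx
      rcases hloc x with h | h
      · have h1 : UpperSemicontinuousWithinAt (ell z R) D x := hell x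
        exact h1.congr_of_eventuallyEq hx (h.symm.filter_mono nhdsWithin_le_nhds)
      · have h1 : UpperSemicontinuousWithinAt
            (fun x => max (ell z R x) ((m : EReal) * φ x)) D x :=
          (hell x).sup (mul_usc hφ.1 hm x hx)
        exact h1.congr_of_eventuallyEq hx (h.symm.filter_mono nhdsWithin_le_nhds)
    · exact fun x hx => (hneg x hx).trans EReal.zero_lt_top
    · intro x hx b
      rcases hloc x with h | h
      · exact (ell_locSub hR x b).congr ((hline x b).eventually h.symm)
      · exact ((ell_locSub hR x b).max (mul_locSub hD hφ hm hx b)).congr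
          ((hline x b).eventually h.symm)
  have hmem : u w ≤ greenFn D z w := by
    apply le_sSup
    refine ⟨u, hpsh, hneg, ⟨-Real.log R, ?_⟩, rfl⟩
    apply Filter.Eventually.filter_mono nhdsWithin_le_nhds
    filter_upwards [hcn.continuousAt.eventually_lt (x₀ := z) continuousAt_const
      (by simpa using hδ)] with x hx
    rw [hu1 x hx]
    by_cases hxz : x = z
    · rw [hxz, ell_self]; exact bot_le
    · rw [ell_of_ne hR hxz, Real.log_div (norm_ne_zero_iff.2 (sub_ne_zero.2 hxz)) hR.ne']
      rfl
  refine ge_iff_le.2 (le_trans ?_ hmem)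
  have hwδ : δ < ‖w - z‖ := by
    by_contra h
    exact (hδs (hnear w (not_lt.1 h))).2 hw.2
  rw [hu2 w (by linarith)]
  exact le_max_right _ _
end
end
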